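/- arXiv:0711.0600 — 4 statements merged into one kernel-verified Lean document; each statement's English description precedes it below -/
import Mathlib

section
/- Inside Λ∧ one has Λ ∩ (l−ψ)Λ∧ = (l−ψ)Λ: a power series x ∈ Λ lies in the image of Λ∧ under l−ψ if and only if it lies in the image of Λ under l−ψ. -/
/-!
Only `Λ ∩ (l - ψ)Λ∧ ⊆ (l - ψ)Λ` needs an argument, and there the preimage `y` itself lies in `Λ`.
Write `g = (1 + T) ^ l - 1`, so that `ψ (∑ y_m T^m) = ∑ y_m g^m`. For `m ≥ 0` the series `g^m` lies
in `Λ`. For `m < 0` it lives in degrees at most `l m`: modulo `l` one has `g = T^l`, so comparing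
coefficients in `g g⁻¹ = 1` shows that each coefficient of `g⁻¹` in a degree `> -l` is `l` times a
combination of other such coefficients; these are thus divisible by every power of `l`, hence zero.

Now let `k < 0` be such that `y_m = 0` for `k < m < 0`. Every `y_m g^m` with `m ≤ k` lives in
degrees at most `l m < k`, so the coefficient of `T^k` in `ψ y` vanishes and that of `l y - ψ y` is
`l y_k`. If `l y - ψ y ∈ Λ`, this forces `y_k = 0`, and descending induction on `k` gives `y ∈ Λ`.

The same works for every distinguished polynomial `g` in `T` of degree at least `2`, with the powers
of `l` replaced by those of an ideal for which the coefficient ring is Hausdorff.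
-/

open Filter

section DistinguishedPolynomial

open Polynomial

variable {A : Type*} [CommRing A] [Nontrivial A]

theorem isMonicOfDegree_one_add_X_pow_sub_one {n : ℕ} (hn : n ≠ 0) :
    IsMonicOfDegree ((1 + X : A[X]) ^ n - 1) n := by
  have hmonic := (isMonicOfDegree_X_add_one (1 : A)).pow n
  rw [one_mul, C_1, add_comm] at hmonic
  exact hmonic.sub (by rw [natDegree_one]; exact hn.pos)

theorem isDistinguishedAt_one_add_X_pow_sub_one {p : ℕ} (hp : p.Prime) {I : Ideal A}
    (hI : (p : A) ∈ I) : ((1 + X : A[X]) ^ p - 1).IsDistinguishedAt I where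
  monic := (isMonicOfDegree_one_add_X_pow_sub_one hp.ne_zero).monic
  mem {n} hn := by
    rw [(isMonicOfDegree_one_add_X_pow_sub_one hp.ne_zero).natDegree_eq] at hn
    rw [coeff_sub, coeff_one_add_X_pow, coeff_one]
    rcases eq_or_ne n 0 with rfl | hn0
    · simp
    · rw [if_neg hn0, sub_zero]
      exact I.mem_of_dvd (Nat.cast_dvd_cast (hp.dvd_choose_self hn0 hn)) hI

end DistinguishedPolynomial

section LaurentExpansion

open Polynomial

variable {A R : Type*} [CommRing A] [TopologicalSpace A] [CommRing R] [Algebra A R]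

/-- `C` behaves like the coefficient functions `x ↦ x_k` of an `A`-algebra `R` of two-sided series
`x = ∑_{k ∈ ℤ} x_k T^k` under the Cauchy product. Neither convergence of the series nor injectivity
of `x ↦ (x_k)_k` is part of the notion. -/
structure IsLaurentExpansion (C : ℤ → R → A) : Prop where
  coeff_add : ∀ x y k, C k (x + y) = C k x + C k y
  coeff_mul : ∀ x y k, C k (x * y) = ∑' i, C i x * C (k - i) y
  coeff_algebraMap : ∀ a k, C k (algebraMap A R a) = if k = 0 then a else 0

/-- `ψ` is the substitution `∑ x_m T^m ↦ ∑ x_m g^m`, coefficient by coefficient. The powers are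
taken in `Rˣ` because `m` runs through all integers. -/
def IsLaurentSubstitution (C : ℤ → R → A) (g : Rˣ) (ψ : R → R) : Prop :=
  ∀ x k, C k (ψ x) = ∑' m, C m x * C k ((g ^ m : Rˣ) : R)

namespace IsLaurentExpansion

variable {C : ℤ → R → A} (hC : IsLaurentExpansion C)

include hC

theorem coeff_one (k : ℤ) : C k 1 = if k = 0 then 1 else 0 := by
  rw [← map_one (algebraMap A R), hC.coeff_algebraMap]

theorem coeff_smul (a : A) (x : R) (k : ℤ) : C k (a • x) = a * C k x := by
  rw [Algebra.smul_def, hC.coeff_mul,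
    tsum_eq_single 0 fun i hi ↦ by rw [hC.coeff_algebraMap, if_neg hi, zero_mul],
    hC.coeff_algebraMap, if_pos rfl, sub_zero]

/-- The `k`-th coefficient function as a linear map, through which sums and differences of
coefficients are computed. -/
def coeffLinearMap (k : ℤ) : R →ₗ[A] A where
  toFun := C k
  map_add' x y := hC.coeff_add x y k
  map_smul' a x := hC.coeff_smul a x k

theorem coeff_sub (x y : R) (k : ℤ) : C k (x - y) = C k x - C k y :=
  map_sub (hC.coeffLinearMap k) x y

theorem coeff_sum {ι : Type*} (s : Finset ι) (x : ι → R) (k : ℤ) :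
    C k (∑ i ∈ s, x i) = ∑ i ∈ s, C k (x i) :=
  map_sum (hC.coeffLinearMap k) x s

theorem coeff_mul_eq_zero {x y : R} {k : ℤ} (h : ∀ i, C i x = 0 ∨ C (k - i) y = 0) :
    C k (x * y) = 0 := by
  rw [hC.coeff_mul, ← tsum_zero]
  exact tsum_congr fun i ↦ (h i).elim (mul_eq_zero_of_left · _) (mul_eq_zero_of_right _)

/-- The subalgebra of series without terms of negative degree; for `R = Λ∧` this is `Λ`. -/
def powerSeries : Subalgebra A R where
  carrier := {x | ∀ k < 0, C k x = 0}
  add_mem' {x y} hx hy k hk := by rw [hC.coeff_add, hx k hk, hy k hk, add_zero]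
  mul_mem' {x y} hx hy k hk := hC.coeff_mul_eq_zero fun i ↦
    (lt_or_ge i 0).imp (hx i) fun hi ↦ hy (k - i) (by lia)
  algebraMap_mem' a k hk := by rw [hC.coeff_algebraMap, if_neg hk.ne]

theorem coeff_pow_eq_zero_of_gt {x : R} {d : ℤ} (hx : ∀ k > d, C k x = 0) (n : ℕ) :
    ∀ k > n * d, C k (x ^ n) = 0 := by
  induction n with
  | zero =>
    intro k hk
    rw [pow_zero, hC.coeff_one, if_neg (by lia)]
  | succ n ih =>
    intro k hk
    push_cast at hk
    rw [pow_succ']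
    exact hC.coeff_mul_eq_zero fun i ↦ (lt_or_ge d i).imp (hx i) fun hi ↦ ih (k - i) (by linarith)

section Indeterminate

variable {T : R} (hT : ∀ k, C k T = if k = 1 then 1 else 0)

include hT

theorem aeval_mem_powerSeries (f : A[X]) : aeval T f ∈ hC.powerSeries := by
  have hmem : T ∈ hC.powerSeries := fun k hk ↦ by rw [hT, if_neg (by lia)]
  exact Algebra.adjoin_le (Set.singleton_subset_iff.2 hmem) (aeval_mem_adjoin_singleton A T)

theorem coeff_pow_mul (n : ℕ) (x : R) (k : ℤ) : C k (T ^ n * x) = C (k - n) x := by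
  induction n generalizing k with
  | zero => rw [pow_zero, one_mul, Nat.cast_zero, sub_zero]
  | succ n ih =>
    rw [pow_succ', mul_assoc, hC.coeff_mul,
      tsum_eq_single 1 fun i hi ↦ by rw [hT, if_neg hi, zero_mul], hT, if_pos rfl, one_mul, ih,
      Nat.cast_succ, sub_sub, add_comm]

theorem coeff_aeval_mul (f : A[X]) (x : R) (k : ℤ) :
    C k (aeval T f * x) = ∑ i ∈ Finset.range (f.natDegree + 1), f.coeff i * C (k - i) x := by
  simp only [aeval_eq_sum_range, Finset.sum_mul, smul_mul_assoc, hC.coeff_sum, hC.coeff_smul,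
    hC.coeff_pow_mul hT]

theorem coeff_eq_zero_of_coeff_aeval_mul_eq_zero {I : Ideal A} [IsHausdorff I A] {f : A[X]}
    (hf : f.IsDistinguishedAt I) {x : R} {d : ℤ} (h : ∀ k > d, C k (aeval T f * x) = 0) :
    ∀ k > d - f.natDegree, C k x = 0 := by
  have mem_pow (n : ℕ) : ∀ k > d - f.natDegree, C k x ∈ I ^ n := by
    induction n with
    | zero => simp
    | succ n ih =>
      intro k hk
      have hsum := h (k + f.natDegree) (by lia)
      rw [hC.coeff_aeval_mul hT, Finset.sum_range_succ, hf.monic.coeff_natDegree, one_mul,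
        add_sub_cancel_right] at hsum
      rw [eq_neg_of_add_eq_zero_right hsum, neg_mem_iff, pow_succ']
      refine sum_mem fun i hi ↦ ?_
      have hi' : i < f.natDegree := Finset.mem_range.1 hi
      exact Ideal.mul_mem_mul (hf.mem hi') (ih _ (by lia))
  intro k hk
  refine IsHausdorff.haus ‹IsHausdorff I A› _ fun n ↦ ?_
  rw [SModEq.zero, smul_eq_mul, Ideal.mul_top]
  exact mem_pow n k hk

section Substitution

variable {I : Ideal A} [IsHausdorff I A] {f : A[X]} (hf : f.IsDistinguishedAt I)
  {g : Rˣ} (hg : (g : R) = aeval T f)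

include hg

theorem coeff_zpow_eq_zero_of_nonneg {m : ℤ} (hm : 0 ≤ m) {k : ℤ} (hk : k < 0) :
    C k ((g ^ m : Rˣ) : R) = 0 := by
  lift m to ℕ using hm
  rw [zpow_natCast, Units.val_pow_eq_pow_val, hg]
  exact pow_mem (hC.aeval_mem_powerSeries hT f) m k hk

include hf

theorem coeff_zpow_eq_zero_of_nonpos {m : ℤ} (hm : m ≤ 0) {k : ℤ} (hk : f.natDegree * m < k) :
    C k ((g ^ m : Rˣ) : R) = 0 := by
  have hinv : ∀ k > -(f.natDegree : ℤ), C k ((g⁻¹ : Rˣ) : R) = 0 := by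
    rw [← zero_sub]
    refine hC.coeff_eq_zero_of_coeff_aeval_mul_eq_zero hT hf fun k hk ↦ ?_
    rw [← hg, Units.mul_inv, hC.coeff_one, if_neg hk.ne']
  obtain ⟨n, rfl⟩ := Int.exists_eq_neg_ofNat hm
  rw [zpow_neg, zpow_natCast, ← inv_pow, Units.val_pow_eq_pow_val]
  exact hC.coeff_pow_eq_zero_of_gt hinv n k (by linarith)

variable (hdeg : 2 ≤ f.natDegree) {ψ : R → R} (hψ : IsLaurentSubstitution C g ψ)

include hdeg hψ

theorem coeff_substitution_eq_zero {y : R} {k : ℤ} (hk : k < 0)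
    (hy : ∀ m, k < m → m < 0 → C m y = 0) : C k (ψ y) = 0 := by
  rw [hψ, ← tsum_zero]
  refine tsum_congr fun m ↦ ?_
  rcases le_or_gt 0 m with hm | hm
  · rw [hC.coeff_zpow_eq_zero_of_nonneg hT hg hm hk, mul_zero]
  rcases lt_or_ge k m with hkm | hmk
  · rw [hy m hkm hm, zero_mul]
  · have hlt : f.natDegree * m < k := by nlinarith
    rw [hC.coeff_zpow_eq_zero_of_nonpos hT hf hg hm.le hlt, mul_zero]

theorem smul_sub_substitution_mem_powerSeries_iff {a : A} (ha : IsLeftRegular a) (y : R) :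
    a • y - ψ y ∈ hC.powerSeries ↔ y ∈ hC.powerSeries := by
  have coeff_eq {k : ℤ} (hk : k < 0) (hy : ∀ m, k < m → m < 0 → C m y = 0) :
      C k (a • y - ψ y) = a * C k y := by
    rw [hC.coeff_sub, hC.coeff_smul, hC.coeff_substitution_eq_zero hT hf hg hdeg hψ hk hy, sub_zero]
  constructor
  · intro h k hk
    induction hn : k.natAbs using Nat.strong_induction_on generalizing k with
    | _ n ih =>
      have hy : ∀ m, k < m → m < 0 → C m y = 0 := fun m hkm hm ↦
        ih m.natAbs (by lia) m hm rfl
      exact ha.mul_left_eq_zero_iff.1 ((coeff_eq hk hy).symm.trans (h k hk))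
  · intro hy k hk
    rw [coeff_eq hk fun m _ ↦ hy m, hy k hk, mul_zero]

end Substitution

end Indeterminate

end IsLaurentExpansion

theorem statement8_general {C : ℤ → R → A} (hC : IsLaurentExpansion C) {T : R}
    (hT : ∀ k, C k T = if k = 1 then 1 else 0) {I : Ideal A} [IsHausdorff I A] {f : A[X]}
    (hf : f.IsDistinguishedAt I) (hdeg : 2 ≤ f.natDegree) {g : Rˣ} (hg : (g : R) = aeval T f)
    {ψ : R → R} (hψ : IsLaurentSubstitution C g ψ) {a : A} (ha : IsLeftRegular a) :
    {x | x ∈ hC.powerSeries ∧ ∃ y, x = a • y - ψ y} =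
      {x | ∃ y ∈ hC.powerSeries, x = a • y - ψ y} := by
  have mem_iff := hC.smul_sub_substitution_mem_powerSeries_iff hT hf hg hdeg hψ ha
  ext x
  constructor
  · rintro ⟨hx, y, rfl⟩
    exact ⟨y, (mem_iff y).1 hx, rfl⟩
  · rintro ⟨y, hy, rfl⟩
    exact ⟨(mem_iff y).2 hy, y, rfl⟩

end LaurentExpansion

/-- Inside `Λ∧` one has `Λ ∩ (l − ψ)Λ∧ = (l − ψ)Λ`:  a power series `x ∈ Λ`
(i.e. an element of `Λ∧` with vanishing coefficients in negative degrees) lies in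
the image of `Λ∧` under `l − ψ` if and only if it lies in the image of `Λ`. -/
theorem statement8 (l : ℕ) [Fact (Nat.Prime l)] (hl : Odd l)
    -- `R` is the ring `Λ∧ = ℤ_l{{T}}`, the `l`-adic completion of the localization
    -- of `Λ = ℤ_l[[T]]` at the prime ideal `lΛ`, described concretely through its
    -- coefficient functions `C k : Λ∧ → ℤ_l` (`x = ∑_{k ∈ ℤ} (C k x)·T^k`,
    -- `C k x → 0` l-adically as `k → −∞`).
    (R : Type) [CommRing R] [Algebra ℤ_[l] R]
    (C : ℤ → R → ℤ_[l]) (Tu gu : Rˣ) (ψ : R →+* R)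
    (hext : ∀ x y : R, (∀ k, C k x = C k y) → x = y)
    (hsurj : ∀ f : ℤ → ℤ_[l], Tendsto f atBot (nhds 0) → ∃ x : R, ∀ k, C k x = f k)
    (htend : ∀ x : R, Tendsto (fun k => C k x) atBot (nhds 0))
    (hadd : ∀ x y : R, ∀ k, C k (x + y) = C k x + C k y)
    (hmul : ∀ x y : R, ∀ k, C k (x * y) = ∑' i : ℤ, C i x * C (k - i) y)
    (halg : ∀ (a : ℤ_[l]) (k : ℤ),
      C k (algebraMap ℤ_[l] R a) = if k = 0 then a else 0)
    (hT : ∀ k, C k (Tu : R) = if k = 1 then 1 else 0)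
    (hgu : (gu : R) = (1 + (Tu : R)) ^ l - 1)
    (hψ : ∀ (x : R) (k : ℤ),
      C k (ψ x) = ∑' m : ℤ, C m x * C k ((gu ^ m : Rˣ) : R)) :
    {x : R | (∀ k : ℤ, k < 0 → C k x = 0) ∧ ∃ y : R, x = (l : ℤ_[l]) • y - ψ y} =
      {x : R | ∃ y : R, (∀ k : ℤ, k < 0 → C k y = 0) ∧ x = (l : ℤ_[l]) • y - ψ y} := by
  have hp : l.Prime := Fact.out
  have hmem : (l : ℤ_[l]) ∈ IsLocalRing.maximalIdeal ℤ_[l] := by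
    rw [PadicInt.maximalIdeal_eq_span_p]
    exact Ideal.mem_span_singleton_self _
  have hdeg := (isMonicOfDegree_one_add_X_pow_sub_one (A := ℤ_[l]) hp.ne_zero).natDegree_eq
  have hg : (gu : R) =
      Polynomial.aeval (Tu : R) ((1 + Polynomial.X : Polynomial ℤ_[l]) ^ l - 1) := by
    simp [hgu]
  exact statement8_general ⟨hadd, hmul, halg⟩ hT (isDistinguishedAt_one_add_X_pow_sub_one hp hmem)
    (hp.two_le.trans_eq hdeg.symm) hg hψ (IsRegular.of_ne_zero (Nat.cast_ne_zero.2 hp.ne_zero)).left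
end

section
/- The ℤ_l-linear map l−ψ : Λ∧ → Λ∧ is injective, and its image equals L(1 + lΛ∧), the image of the subgroup 1 + lΛ∧ of Λ∧× under the integral logarithm L. -/
/-!
Write `w v = l⁻¹ * log (1 + l * v)`, which makes sense although `l` is not invertible. It is the
limit of `((1 + l * v) ^ l ^ n - 1) / l ^ (n + 1)`, so it turns products of elements `1 + l * v`
into sums and commutes with ring endomorphisms `ψ`; hence `L (1 + l * v) = (l - ψ) (w v)`. As `l` is
odd, `v ↦ w v - v` is an `l`-adic contraction, so `w` is surjective and the image of `L` on
`1 + l * R` is all of `(l - ψ) R`. For injectivity, the residue ring `R / l` is the field of Laurent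
series over `ZMod l`, so `ψ` is injective modulo `l`, and a solution of `l * x = ψ x` is
divisible by every power of `l`.
-/

open Filter

open scoped Topology

section Adic

variable {A : Type*} [CommRing A] {a : A}

theorem smodEq_span_pow_iff {n : ℕ} {x y : A} :
    x ≡ y [SMOD (Ideal.span {a} ^ n • ⊤ : Ideal A)] ↔ a ^ n ∣ x - y := by
  simp [SModEq.sub_mem, Ideal.span_singleton_pow, Ideal.mem_span_singleton]

theorem eq_zero_of_forall_pow_dvd [IsHausdorff (Ideal.span {a}) A] {x : A}
    (hx : ∀ n : ℕ, a ^ n ∣ x) : x = 0 :=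
  IsHausdorff.haus (I := Ideal.span {a}) inferInstance x fun n ↦
    smodEq_span_pow_iff.mpr ((sub_zero x).symm ▸ hx n)

theorem exists_isFixedPt_of_pow_succ_dvd_sub [IsAdicComplete (Ideal.span {a}) A] {F : A → A}
    (hF : ∀ (m : ℕ) (x y : A), a ^ m ∣ x - y → a ^ (m + 1) ∣ F x - F y) :
    ∃ x, Function.IsFixedPt F x := by
  have hsucc (m n : ℕ) (hmn : m ≤ n) : a ^ m ∣ F^[m] 0 - F^[n] 0 := by
    induction m generalizing n with
    | zero => simp
    | succ m ih =>
      obtain ⟨n, rfl⟩ := Nat.exists_eq_add_of_lt hmn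
      simp only [Function.iterate_succ_apply']
      exact hF m _ _ (ih _ (by omega))
  obtain ⟨x, hx⟩ := IsPrecomplete.prec (I := Ideal.span {a}) inferInstance
    (f := fun n ↦ F^[n] 0) fun {m n} hmn ↦ smodEq_span_pow_iff.mpr (hsucc m n hmn)
  simp only [smodEq_span_pow_iff] at hx
  refine ⟨x, sub_eq_zero.mp (eq_zero_of_forall_pow_dvd (a := a) fun m ↦ ?_)⟩
  have hFx : a ^ (m + 1) ∣ F^[m + 1] 0 - F x := by
    rw [Function.iterate_succ_apply']
    exact hF m _ _ (hx m)
  have := dvd_sub (hx (m + 1)) hFx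
  rw [sub_sub_sub_cancel_left] at this
  exact (pow_dvd_pow a m.le_succ).trans this

theorem dvd_of_dvd_map {n : ℕ} (hn : (Ideal.span {(n : A)}).IsMaximal) (ψ : A →+* A) {x : A}
    (hx : (n : A) ∣ ψ x) : (n : A) ∣ x := by
  have hle : Ideal.span {(n : A)} ≤ (Ideal.span {(n : A)}).comap ψ := by simp
  rw [← Ideal.mem_span_singleton, hn.eq_of_le (Ideal.comap_ne_top ψ hn.ne_top) hle]
  simpa [Ideal.mem_span_singleton] using hx

theorem isUnit_one_add_mul [IsAdicComplete (Ideal.span {a}) A] (v : A) : IsUnit (1 + a * v) := by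
  rw [add_comm]
  exact Ideal.mem_jacobson_bot.mp
    (IsAdicComplete.le_jacobson_bot _ (Ideal.mem_span_singleton_self a)) v

variable [TopologicalSpace A]

theorem tendsto_zero_iff_forall_pow_dvd (hA : IsAdic (Ideal.span {a})) {ι : Type*} {L : Filter ι}
    {f : ι → A} : Tendsto f L (𝓝 0) ↔ ∀ M : ℕ, ∀ᶠ i in L, a ^ M ∣ f i := by
  simp [hA.hasBasis_nhds_zero.tendsto_right_iff, Ideal.span_singleton_pow,
    Ideal.mem_span_singleton]

theorem tendsto_pow_atTop_zero_of_isAdic (hA : IsAdic (Ideal.span {a})) :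
    Tendsto (fun n : ℕ ↦ a ^ n) atTop (𝓝 0) :=
  (tendsto_zero_iff_forall_pow_dvd hA).mpr fun M ↦
    (eventually_ge_atTop M).mono fun _ hn ↦ pow_dvd_pow a hn

theorem pow_dvd_tsum [IsTopologicalRing A] (hA : IsAdic (Ideal.span {a})) {ι : Type*} {f : ι → A}
    {M : ℕ} (hf : ∀ i, a ^ M ∣ f i) : a ^ M ∣ ∑' i, f i := by
  have hclosed : IsClosed ((Ideal.span {a} ^ M : Ideal A) : Set A) :=
    AddSubgroup.isClosed_of_isOpen (Ideal.span {a} ^ M : Ideal A).toAddSubgroup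
      ((isAdic_iff.mp hA).1 M)
  simpa [Ideal.span_singleton_pow, Ideal.mem_span_singleton] using
    tsum_mem hclosed fun i ↦ by
      simpa [Ideal.span_singleton_pow, Ideal.mem_span_singleton] using hf i

theorem continuous_of_forall_pow_dvd [IsTopologicalAddGroup A] {B : Type*} [CommRing B]
    [TopologicalSpace B] [IsTopologicalAddGroup B] {b : B} (hA : IsAdic (Ideal.span {a}))
    (hB : IsAdic (Ideal.span {b})) (f : A →+ B) (hf : ∀ (M : ℕ) (x : A), a ^ M ∣ x → b ^ M ∣ f x) :
    Continuous f := by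
  refine continuous_of_continuousAt_zero f ?_
  rw [ContinuousAt, map_zero, tendsto_zero_iff_forall_pow_dvd hB]
  exact fun M ↦ ((tendsto_zero_iff_forall_pow_dvd hA).mp tendsto_id M).mono (hf M)

end Adic

section PadicInt

variable {l : ℕ} [Fact l.Prime]

theorem isAdic_span_natCast_padicInt : IsAdic (Ideal.span {(l : ℤ_[l])}) := by
  have hball (M : ℕ) : ((Ideal.span {(l : ℤ_[l])} ^ M : Ideal ℤ_[l]) : Set ℤ_[l]) =
      Metric.closedBall 0 ((l : ℝ) ^ (-M : ℤ)) := by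
    ext x
    rw [SetLike.mem_coe, Ideal.span_singleton_pow, ← PadicInt.norm_le_pow_iff_mem_span_pow,
      mem_closedBall_zero_iff]
  refine isAdic_iff.mpr ⟨fun M ↦ ?_, fun s hs ↦ ?_⟩
  · rw [hball]
    exact IsUltrametricDist.isOpen_closedBall _
      (zpow_pos (mod_cast (Fact.out : l.Prime).pos) _).ne'
  · obtain ⟨ε, hε, hs⟩ := Metric.mem_nhds_iff.mp hs
    obtain ⟨M, hM⟩ := PadicInt.exists_pow_neg_lt l hε
    exact ⟨M, hball M ▸ (Metric.closedBall_subset_ball hM).trans hs⟩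

theorem two_mul_padicValNat_succ_le (j : ℕ) : 2 * padicValNat l (j + 1) ≤ j + 1 := by
  obtain hv | hv := Nat.eq_zero_or_pos (padicValNat l (j + 1))
  · simp [hv]
  calc 2 * padicValNat l (j + 1) ≤ 2 ^ padicValNat l (j + 1) := by
        obtain ⟨m, hm⟩ := Nat.exists_eq_add_of_lt hv
        have := Nat.lt_two_pow_self (n := m)
        rw [hm, zero_add, pow_succ]
        omega
    _ ≤ l ^ padicValNat l (j + 1) := Nat.pow_le_pow_left (Fact.out : l.Prime).two_le _
    _ ≤ j + 1 := Nat.le_of_dvd j.succ_pos pow_padicValNat_dvd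

theorem norm_pow_div_succ_le (j : ℕ) :
    ‖(l : ℚ_[l]) ^ j / ((j : ℚ_[l]) + 1)‖ ≤ (l : ℝ) ^ (-(j / 2 : ℕ) : ℤ) := by
  have hl : (1 : ℝ) < l := mod_cast (Fact.out : l.Prime).one_lt
  have hnorm : ‖(j : ℚ_[l]) + 1‖ = (l : ℝ) ^ (-padicValNat l (j + 1) : ℤ) := by
    have := Padic.norm_eq_zpow_neg_valuation (p := l) (x := (j + 1 : ℕ)) (mod_cast j.succ_ne_zero)
    rwa [Padic.valuation_natCast, Nat.cast_succ] at this
  rw [norm_div, Padic.norm_p_pow, hnorm, ← zpow_sub₀ (by positivity)]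
  have := two_mul_padicValNat_succ_le (l := l) j
  exact zpow_le_zpow_right₀ hl.le (by omega)

variable (l) in
/-- The `l`-adic integer `l ^ j / (j + 1)`. -/
noncomputable def powDivSucc (j : ℕ) : ℤ_[l] :=
  ⟨(l : ℚ_[l]) ^ j / (j + 1), (norm_pow_div_succ_le j).trans
    (zpow_le_one_of_nonpos₀ (mod_cast (Fact.out : l.Prime).one_le) (by omega))⟩

theorem coe_powDivSucc (j : ℕ) : (powDivSucc l j : ℚ_[l]) = (l : ℚ_[l]) ^ j / (j + 1) := rfl

theorem succ_mul_powDivSucc (j : ℕ) : ((j : ℤ_[l]) + 1) * powDivSucc l j = (l : ℤ_[l]) ^ j := by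
  apply Subtype.ext
  push_cast [coe_powDivSucc]
  exact mul_div_cancel₀ _ (mod_cast j.succ_ne_zero)

theorem pow_half_dvd_powDivSucc (j : ℕ) : (l : ℤ_[l]) ^ (j / 2) ∣ powDivSucc l j := by
  rw [← Ideal.mem_span_singleton, ← PadicInt.norm_le_pow_iff_mem_span_pow]
  exact norm_pow_div_succ_le j

theorem powDivSucc_zero : powDivSucc l 0 = 1 := by
  simpa using succ_mul_powDivSucc (l := l) 0

theorem dvd_powDivSucc (hl : Odd l) {j : ℕ} (hj : j ≠ 0) : (l : ℤ_[l]) ∣ powDivSucc l j := by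
  obtain rfl | hj : j = 1 ∨ 1 ≤ j / 2 := by omega
  · have htwo : IsUnit (2 : ℤ_[l]) := by
      rw [PadicInt.isUnit_iff]
      exact_mod_cast PadicInt.norm_natCast_eq_one_iff.mpr hl.coprime_two_right
    have := succ_mul_powDivSucc (l := l) 1
    rw [Nat.cast_one, one_add_one_eq_two, pow_one] at this
    exact htwo.dvd_mul_left.mp this.symm.dvd
  · exact (dvd_pow_self _ (by omega)).trans (pow_half_dvd_powDivSucc j)

theorem toZMod_eq_zero_iff {x : ℤ_[l]} : PadicInt.toZMod x = 0 ↔ (l : ℤ_[l]) ∣ x := by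
  rw [← RingHom.mem_ker, PadicInt.ker_toZMod, PadicInt.maximalIdeal_eq_span_p,
    Ideal.mem_span_singleton]

theorem continuous_toZMod : Continuous (PadicInt.toZMod : ℤ_[l] →+* ZMod l) := by
  refine continuous_of_continuousAt_zero _ ?_
  rw [ContinuousAt, map_zero, nhds_discrete (ZMod l), tendsto_pure]
  filter_upwards [(tendsto_zero_iff_forall_pow_dvd isAdic_span_natCast_padicInt).mp tendsto_id 1]
    with x hx
  simpa [toZMod_eq_zero_iff] using hx

theorem choose_neg_one {A : Type*} [CommRing A] [BinomialRing A] (j : ℕ) :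
    Ring.choose (-1 : A) j = (-1) ^ j := by
  simp [Ring.choose_neg', Ring.multichoose_one, Int.negOnePow, Units.smul_def]

theorem tendsto_choose_pow_sub_one (j : ℕ) :
    Tendsto (fun n : ℕ ↦ ((l ^ n - 1).choose j : ℤ_[l])) atTop (𝓝 ((-1) ^ j)) := by
  have hpow : Tendsto (fun n : ℕ ↦ (l : ℤ_[l]) ^ n - 1) atTop (𝓝 (0 - 1)) :=
    (tendsto_pow_atTop_zero_of_isAdic isAdic_span_natCast_padicInt).sub_const 1
  have hchoose := ((PadicInt.continuous_choose j).tendsto _).comp hpow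
  rw [zero_sub, choose_neg_one] at hchoose
  refine hchoose.congr fun n ↦ ?_
  rw [← Ring.choose_natCast, Nat.cast_sub (Nat.one_le_pow _ _ (Fact.out : l.Prime).pos)]
  simp

end PadicInt

section DividedLog

variable {l : ℕ} [Fact l.Prime] {R : Type*} [CommRing R]

theorem natCast_prime_pow_mul_cancel [IsAddTorsionFree R] {n : ℕ} {x y : R}
    (h : (l : R) ^ n * x = (l : R) ^ n * y) : x = y :=
  nsmul_right_injective (pow_ne_zero n (Fact.out : l.Prime).ne_zero) (by simpa using h)

variable [Algebra ℤ_[l] R]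

theorem natCast_pow_dvd_smul {a : ℤ_[l]} {M : ℕ} (ha : (l : ℤ_[l]) ^ M ∣ a) (x : R) :
    (l : R) ^ M ∣ a • x := by
  rw [Algebra.smul_def]
  exact Dvd.dvd.mul_right (by simpa using map_dvd (algebraMap ℤ_[l] R) ha) x

/-- The power series `l⁻¹ * ∑ j, c j * (l * v) ^ (j + 1) / (j + 1)`, written so that it makes sense
over a ring in which `l` is not invertible. -/
noncomputable def powDivSeries [TopologicalSpace R] (c : ℕ → ℤ_[l]) (v : R) : R :=
  ∑' j, (c j * powDivSucc l j) • v ^ (j + 1)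

variable (l) in
/-- The divided logarithm `l⁻¹ * log (1 + l * v)`. -/
noncomputable def logDiv [TopologicalSpace R] (v : R) : R :=
  powDivSeries (fun j ↦ (-1 : ℤ_[l]) ^ j) v

theorem natCast_mul_powDivSeries_choose [TopologicalSpace R] (n : ℕ) (v : R) :
    ((l * (n + 1) : ℕ) : R) * powDivSeries (fun j ↦ (n.choose j : ℤ_[l])) v =
      (1 + l * v) ^ (n + 1) - 1 := by
  have hcoeff (j : ℕ) : ((l * (n + 1) : ℕ) : ℤ_[l]) * ((n.choose j : ℤ_[l]) * powDivSucc l j) =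
      (n + 1).choose (j + 1) * (l : ℤ_[l]) ^ (j + 1) := by
    have habsorb : ((n : ℤ_[l]) + 1) * n.choose j = (n + 1).choose (j + 1) * ((j : ℤ_[l]) + 1) :=
      mod_cast Nat.add_one_mul_choose_eq n j
    push_cast
    linear_combination (l : ℤ_[l]) * powDivSucc l j * habsorb +
      (l : ℤ_[l]) * (n + 1).choose (j + 1) * succ_mul_powDivSucc (l := l) j
  have hterm (j : ℕ) : ((l * (n + 1) : ℕ) : R) *
      (((n.choose j : ℤ_[l]) * powDivSucc l j) • v ^ (j + 1)) =
      (l * v) ^ (j + 1) * (n + 1).choose (j + 1) := by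
    rw [← map_natCast (algebraMap ℤ_[l] R), ← Algebra.smul_def, smul_smul, hcoeff,
      Algebra.smul_def, map_mul, map_pow, map_natCast, map_natCast]
    ring
  rw [powDivSeries, tsum_eq_sum (s := Finset.range (n + 1)) fun j hj ↦ by
    simp [Nat.choose_eq_zero_of_lt (Nat.not_lt.mp (Finset.mem_range.not.mp hj))],
    Finset.mul_sum, Finset.sum_congr rfl fun j _ ↦ hterm j, add_comm 1, add_pow,
    Finset.sum_range_succ' _ (n + 1)]
  simp

theorem one_add_mul_pow_prime_pow [TopologicalSpace R] (n : ℕ) (v : R) :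
    (1 + l * v) ^ l ^ n =
      1 + (l : R) ^ (n + 1) * powDivSeries (fun j ↦ ((l ^ n - 1).choose j : ℤ_[l])) v := by
  have := natCast_mul_powDivSeries_choose (l := l) (l ^ n - 1) v
  rw [Nat.sub_add_cancel (Nat.one_le_pow _ _ (Fact.out : l.Prime).pos), ← pow_succ'] at this
  rw [← Nat.cast_pow, this, add_sub_cancel]

variable [UniformSpace R] [IsUniformAddGroup R] [CompleteSpace R]

theorem summable_mul_powDivSucc_smul (hR : IsAdic (Ideal.span {(l : R)})) (c : ℕ → ℤ_[l]) (v : R) :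
    Summable fun j ↦ (c j * powDivSucc l j) • v ^ (j + 1) := by
  have : NonarchimedeanRing R := hR ▸ (Ideal.span {(l : R)}).nonarchimedean
  refine NonarchimedeanAddGroup.summable_of_tendsto_cofinite_zero ?_
  rw [Nat.cofinite_eq_atTop, tendsto_zero_iff_forall_pow_dvd hR]
  intro M
  filter_upwards [eventually_ge_atTop (2 * M)] with j hj
  exact natCast_pow_dvd_smul
    (((pow_dvd_pow _ (by omega)).trans (pow_half_dvd_powDivSucc j)).mul_left _) _

variable [IsTopologicalRing R] [T2Space R]

theorem tendsto_powDivSeries (hR : IsAdic (Ideal.span {(l : R)})) {ι : Type*} {L : Filter ι}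
    {c : ι → ℕ → ℤ_[l]} {c₀ : ℕ → ℤ_[l]} (hc : Tendsto c L (𝓝 c₀)) (v : R) :
    Tendsto (fun i ↦ powDivSeries (c i) v) L (𝓝 (powDivSeries c₀ v)) := by
  rw [← tendsto_sub_nhds_zero_iff, tendsto_zero_iff_forall_pow_dvd hR]
  intro M
  have hcoeff (j : ℕ) : ∀ᶠ i in L, (l : ℤ_[l]) ^ M ∣ c i j - c₀ j :=
    (tendsto_zero_iff_forall_pow_dvd isAdic_span_natCast_padicInt).mp
      (tendsto_sub_nhds_zero_iff.mpr (tendsto_pi_nhds.mp hc j)) M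
  filter_upwards [(Finset.range (2 * M)).eventually_all.mpr fun j _ ↦ hcoeff j] with i hi
  rw [powDivSeries, powDivSeries, ← (summable_mul_powDivSucc_smul hR _ v).tsum_sub
    (summable_mul_powDivSucc_smul hR _ v)]
  refine pow_dvd_tsum hR fun j ↦ ?_
  rw [← sub_smul, ← sub_mul]
  refine natCast_pow_dvd_smul ?_ _
  by_cases hj : j < 2 * M
  · exact (hi j (Finset.mem_range.mpr hj)).mul_right _
  · exact ((pow_dvd_pow _ (by omega)).trans (pow_half_dvd_powDivSucc j)).mul_left _

theorem tendsto_logDiv (hR : IsAdic (Ideal.span {(l : R)})) (v : R) :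
    Tendsto (fun n ↦ powDivSeries (fun j ↦ ((l ^ n - 1).choose j : ℤ_[l])) v) atTop
      (𝓝 (logDiv l v)) :=
  tendsto_powDivSeries hR (tendsto_pi_nhds.mpr tendsto_choose_pow_sub_one) v

theorem logDiv_surjective (hR : IsAdic (Ideal.span {(l : R)})) (hl : Odd l) :
    Function.Surjective (logDiv l : R → R) := by
  intro y
  have hsplit (v : R) : logDiv l v =
      v + ∑' j, ((-1 : ℤ_[l]) ^ (j + 1) * powDivSucc l (j + 1)) • v ^ (j + 2) := by
    rw [logDiv, powDivSeries, (summable_mul_powDivSucc_smul hR _ v).tsum_eq_zero_add]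
    simp [powDivSucc_zero]
  have hsummable (v : R) := (summable_nat_add_iff 1).mpr
    (summable_mul_powDivSucc_smul hR (fun j ↦ (-1 : ℤ_[l]) ^ j) v)
  have := hR.isAdicComplete_iff.mpr ⟨inferInstance, inferInstance⟩
  obtain ⟨v, hv⟩ := exists_isFixedPt_of_pow_succ_dvd_sub (a := (l : R))
    (F := fun v ↦ y - (logDiv l v - v)) fun m u v huv ↦ by
      rw [hsplit, hsplit, add_sub_cancel_left, add_sub_cancel_left, sub_sub_sub_cancel_left,
        ← (hsummable v).tsum_sub (hsummable u)]
      refine pow_dvd_tsum hR fun j ↦ ?_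
      rw [← smul_sub, Algebra.smul_def, pow_succ']
      refine mul_dvd_mul ?_ ((dvd_sub_comm.mp huv).trans (sub_dvd_pow_sub_pow v u _))
      simpa using map_dvd (algebraMap ℤ_[l] R)
        ((dvd_powDivSucc hl j.succ_ne_zero).mul_left ((-1) ^ (j + 1)))
  refine ⟨v, ?_⟩
  have : y - (logDiv l v - v) = v := hv
  linear_combination -this

variable [IsAddTorsionFree R]

theorem logDiv_mul (hR : IsAdic (Ideal.span {(l : R)})) {u v x : R}
    (h : (1 + l * u) * (1 + l * v) = 1 + l * x) :
    logDiv l x = logDiv l u + logDiv l v := by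
  have hpow := (tendsto_pow_atTop_zero_of_isAdic hR).comp (tendsto_add_atTop_nat 1)
  have hlim := ((tendsto_logDiv hR u).add (tendsto_logDiv hR v)).add
    (hpow.mul ((tendsto_logDiv hR u).mul (tendsto_logDiv hR v)))
  rw [zero_mul, add_zero] at hlim
  refine tendsto_nhds_unique ((tendsto_logDiv hR x).congr fun n ↦ ?_) hlim
  refine natCast_prime_pow_mul_cancel (l := l) (n := n + 1) ?_
  have := congr_arg (· ^ l ^ n) h
  simp only [mul_pow, one_add_mul_pow_prime_pow] at this
  simp only [Function.comp_apply]
  linear_combination -this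

theorem logDiv_pow_prime (hR : IsAdic (Ideal.span {(l : R)})) {v x : R}
    (h : (1 + l * v) ^ l = 1 + l * x) : logDiv l x = l * logDiv l v := by
  refine tendsto_nhds_unique ((tendsto_logDiv hR x).congr fun n ↦ ?_)
    (((tendsto_logDiv hR v).comp (tendsto_add_atTop_nat 1)).const_mul (l : R))
  refine natCast_prime_pow_mul_cancel (l := l) (n := n + 1) ?_
  have := congr_arg (· ^ l ^ n) h
  simp only [← pow_mul, ← pow_succ', one_add_mul_pow_prime_pow] at this
  simp only [Function.comp_apply]
  linear_combination -this

theorem map_logDiv (hR : IsAdic (Ideal.span {(l : R)})) (ψ : R →+* R) (v : R) :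
    ψ (logDiv l v) = logDiv l (ψ v) := by
  have hψ : Continuous ψ := continuous_of_forall_pow_dvd hR hR ψ.toAddMonoidHom fun M x hx ↦ by
    simpa using map_dvd ψ hx
  refine tendsto_nhds_unique ((hψ.tendsto _).comp (tendsto_logDiv hR v))
    ((tendsto_logDiv hR (ψ v)).congr fun n ↦ ?_)
  refine natCast_prime_pow_mul_cancel (l := l) (n := n + 1) ?_
  have := congr_arg ψ (one_add_mul_pow_prime_pow (l := l) n v)
  simp only [map_add, map_mul, map_pow, map_one, map_natCast] at this
  exact add_left_cancel ((one_add_mul_pow_prime_pow n (ψ v)).symm.trans this)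

end DividedLog

section Operator

variable {l : ℕ} [Fact l.Prime] {R : Type*} [CommRing R] [IsAddTorsionFree R]

theorem injective_natCast_mul_sub_map [IsHausdorff (Ideal.span {(l : R)}) R] {ψ : R →+* R}
    (hψ : ∀ x, (l : R) ∣ ψ x → (l : R) ∣ x) : Function.Injective fun x ↦ (l : R) * x - ψ x := by
  have hdvd (n : ℕ) {x : R} (hx : l * x = ψ x) : (l : R) ^ n ∣ x := by
    induction n generalizing x with
    | zero => simp
    | succ n ih =>
      obtain ⟨y, rfl⟩ := hψ x ⟨x, hx.symm⟩
      rw [pow_succ']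
      refine mul_dvd_mul_left _ (ih (natCast_prime_pow_mul_cancel (l := l) (n := 1) ?_))
      rwa [pow_one, ← map_natCast ψ, ← map_mul, map_natCast]
  intro x y hxy
  have hfix : l * (x - y) = ψ (x - y) := by
    rw [map_sub]
    linear_combination hxy
  exact sub_eq_zero.mp (eq_zero_of_forall_pow_dvd fun n ↦ hdvd n hfix)

variable [Algebra ℤ_[l] R] [UniformSpace R] [IsUniformAddGroup R] [IsTopologicalRing R]
  [CompleteSpace R] [T2Space R]

theorem exists_pow_mul_inverse_eq_one_add_mul (hR : IsAdic (Ideal.span {(l : R)})) (ψ : R →+* R)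
    (v : R) : ∃ t, (1 + l * v) ^ l * Ring.inverse (ψ (1 + l * v)) = 1 + l * t ∧
      logDiv l t = l * logDiv l v - ψ (logDiv l v) := by
  obtain ⟨a, ha⟩ : ∃ a, (1 + l * v) ^ l = 1 + l * a :=
    ⟨l * powDivSeries (fun j ↦ ((l ^ 1 - 1).choose j : ℤ_[l])) v, by
      simpa [pow_two, mul_assoc] using one_add_mul_pow_prime_pow (l := l) 1 v⟩
  have hψ : ψ (1 + l * v) = 1 + l * ψ v := by simp
  have := hR.isAdicComplete_iff.mpr ⟨inferInstance, inferInstance⟩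
  have hinv := Ring.mul_inverse_cancel _ (isUnit_one_add_mul (a := (l : R)) (ψ v))
  set t := (a - ψ v) * Ring.inverse (1 + l * ψ v)
  have hmul : (1 + l * ψ v) * (1 + l * t) = 1 + l * a := by
    linear_combination (l * (a - ψ v)) * hinv
  refine ⟨t, ?_, ?_⟩
  · rw [hψ, ha, ← hmul]
    linear_combination (1 + l * t) * hinv
  · have := logDiv_mul hR hmul
    rw [logDiv_pow_prime hR ha, ← map_logDiv hR] at this
    linear_combination -this

end Operator

section LaurentSeriesRing

theorem coeff_mul_eq_tsum {A : Type*} [Semiring A] [TopologicalSpace A] (f g : LaurentSeries A)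
    (k : ℤ) : (f * g).coeff k = ∑' i : ℤ, f.coeff i * g.coeff (k - i) := by
  have hmem {ij : ℤ × ℤ} (hij : ij ∈ Finset.antidiagonal f.isPWO_support g.isPWO_support k) :
      ij.2 = k - ij.1 := eq_sub_of_add_eq' (Finset.mem_antidiagonal.mp hij).2.2
  rw [HahnSeries.coeff_mul, tsum_eq_sum (s := (Finset.antidiagonal f.isPWO_support
    g.isPWO_support k).image Prod.fst), Finset.sum_image]
  · exact Finset.sum_congr rfl fun ij hij ↦ by rw [hmem hij]
  · exact fun ij hij ij' hij' h ↦ Prod.ext h (by rw [hmem hij, hmem hij', h])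
  · intro i hi
    contrapose! hi
    refine Finset.mem_image_of_mem Prod.fst
      (a := (i, k - i)) (Finset.mem_antidiagonal.mpr ⟨?_, ?_, add_sub_cancel i k⟩)
    · exact left_ne_zero_of_mul hi
    · exact right_ne_zero_of_mul hi

variable {l : ℕ} [Fact l.Prime] {R : Type*} [CommRing R] [Algebra ℤ_[l] R]

/-- The functions `C k` are the coefficient functions of an identification of `R` with the ring of
two-sided series `∑ k : ℤ, x k * T ^ k` over `ℤ_[l]` with `x k → 0` as `k → -∞`. -/
structure IsLaurentSeriesRing (C : ℤ → R → ℤ_[l]) : Prop where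
  ext : ∀ x y : R, (∀ k, C k x = C k y) → x = y
  exists_eq : ∀ f : ℤ → ℤ_[l], Tendsto f atBot (𝓝 0) → ∃ x : R, ∀ k, C k x = f k
  tendsto_atBot : ∀ x : R, Tendsto (fun k ↦ C k x) atBot (𝓝 0)
  add : ∀ x y : R, ∀ k, C k (x + y) = C k x + C k y
  mul : ∀ x y : R, ∀ k, C k (x * y) = ∑' i : ℤ, C i x * C (k - i) y
  algebraMap : ∀ (a : ℤ_[l]) (k : ℤ), C k (algebraMap ℤ_[l] R a) = if k = 0 then a else 0

namespace IsLaurentSeriesRing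

variable {C : ℤ → R → ℤ_[l]}

/-- The `k`-th coefficient as a `ℤ_[l]`-linear map. -/
noncomputable def coeff (hC : IsLaurentSeriesRing C) (k : ℤ) : R →ₗ[ℤ_[l]] ℤ_[l] where
  toFun := C k
  map_add' x y := hC.add x y k
  map_smul' a x := by
    rw [Algebra.smul_def, hC.mul, tsum_eq_single 0 fun i hi ↦ by simp [hC.algebraMap, hi]]
    simp [hC.algebraMap]

variable (hC : IsLaurentSeriesRing C)
include hC

theorem coeff_apply (k : ℤ) (x : R) : hC.coeff k x = C k x := rfl

theorem eventually_pow_dvd (M : ℕ) (x : R) : ∀ᶠ k in atBot, (l : ℤ_[l]) ^ M ∣ hC.coeff k x :=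
  (tendsto_zero_iff_forall_pow_dvd isAdic_span_natCast_padicInt).mp (hC.tendsto_atBot x) M

theorem pow_dvd_iff {M : ℕ} {x : R} : (l : R) ^ M ∣ x ↔ ∀ k, (l : ℤ_[l]) ^ M ∣ hC.coeff k x := by
  have hsmul (y : R) : (l : R) ^ M * y = (l : ℤ_[l]) ^ M • y := by
    simp [Algebra.smul_def]
  refine ⟨?_, fun hx ↦ ?_⟩
  · rintro ⟨y, rfl⟩ k
    exact ⟨hC.coeff k y, by rw [hsmul, map_smul, smul_eq_mul]⟩
  choose f hf using hx
  have hl : (l : ℤ_[l]) ≠ 0 := mod_cast (Fact.out : l.Prime).ne_zero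
  have hf0 : Tendsto f atBot (𝓝 0) := by
    refine (tendsto_zero_iff_forall_pow_dvd isAdic_span_natCast_padicInt).mpr fun N ↦ ?_
    filter_upwards [hC.eventually_pow_dvd (M + N) x] with k hk
    rw [hf, pow_add] at hk
    exact (mul_dvd_mul_iff_left (pow_ne_zero M hl)).mp hk
  obtain ⟨y, hy⟩ := hC.exists_eq f hf0
  refine ⟨y, hC.ext _ _ fun k ↦ ?_⟩
  rw [← hC.coeff_apply, ← hC.coeff_apply, hsmul, map_smul, hf, hC.coeff_apply, hy, smul_eq_mul]

theorem isAddTorsionFree : IsAddTorsionFree R where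
  nsmul_right_injective n hn x y hxy := hC.ext x y fun k ↦
    nsmul_right_injective hn
      (by simpa only [map_nsmul, coeff_apply] using congr_arg (hC.coeff k) hxy)

theorem isAdicComplete : IsAdicComplete (Ideal.span {(l : R)}) R := by
  have hpadic : IsAdicComplete (Ideal.span {(l : ℤ_[l])}) ℤ_[l] :=
    isAdic_span_natCast_padicInt.isAdicComplete_iff.mpr ⟨inferInstance, inferInstance⟩
  have haus : IsHausdorff (Ideal.span {(l : R)}) R := by
    refine ⟨fun x hx ↦ hC.ext x 0 fun k ↦ ?_⟩
    rw [← hC.coeff_apply, ← hC.coeff_apply, map_zero]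
    refine eq_zero_of_forall_pow_dvd fun n ↦ hC.pow_dvd_iff.mp ?_ k
    simpa using smodEq_span_pow_iff.mp (hx n)
  have hprec : IsPrecomplete (Ideal.span {(l : R)}) R := by
    refine ⟨fun f hf ↦ ?_⟩
    simp only [smodEq_span_pow_iff, hC.pow_dvd_iff, map_sub] at hf ⊢
    have hlim (k : ℤ) : ∃ c, ∀ n, (l : ℤ_[l]) ^ n ∣ hC.coeff k (f n) - c := by
      obtain ⟨c, hc⟩ := hpadic.toIsPrecomplete.prec fun hmn ↦ smodEq_span_pow_iff.mpr (hf hmn k)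
      exact ⟨c, fun n ↦ smodEq_span_pow_iff.mp (hc n)⟩
    choose c hc using hlim
    have hc0 : Tendsto c atBot (𝓝 0) := by
      refine (tendsto_zero_iff_forall_pow_dvd isAdic_span_natCast_padicInt).mpr fun M ↦ ?_
      filter_upwards [hC.eventually_pow_dvd M (f M)] with k hk
      exact (dvd_sub_right hk).mp (hc k M)
    obtain ⟨x, hx⟩ := hC.exists_eq c hc0
    exact ⟨x, fun n k ↦ by simpa only [hC.coeff_apply, hx] using hc k n⟩
  exact {}

theorem toZMod_coeff_mul (x y : R) (k : ℤ) : PadicInt.toZMod (hC.coeff k (x * y)) =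
    ∑' i : ℤ, PadicInt.toZMod (hC.coeff i x) * PadicInt.toZMod (hC.coeff (k - i) y) := by
  have hatBot : Tendsto (fun i ↦ C i x * C (k - i) y) atBot (𝓝 0) :=
    (tendsto_zero_iff_forall_pow_dvd isAdic_span_natCast_padicInt).mpr fun M ↦
      (hC.eventually_pow_dvd M x).mono fun _ hi ↦ hi.mul_right _
  have hsub : Tendsto (fun i ↦ k - i) atTop atBot := by
    simpa only [sub_eq_add_neg] using
      tendsto_atBot_add_const_left atTop k tendsto_neg_atTop_atBot
  have hatTop : Tendsto (fun i ↦ C i x * C (k - i) y) atTop (𝓝 0) :=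
    (tendsto_zero_iff_forall_pow_dvd isAdic_span_natCast_padicInt).mpr fun M ↦
      (hsub.eventually (hC.eventually_pow_dvd M y)).mono fun _ hi ↦ hi.mul_left _
  have hsummable : Summable fun i ↦ C i x * C (k - i) y :=
    NonarchimedeanAddGroup.summable_of_tendsto_cofinite_zero
      (Int.cofinite_eq ▸ hatBot.sup hatTop)
  rw [hC.coeff_apply, hC.mul]
  exact (hsummable.map_tsum PadicInt.toZMod continuous_toZMod).trans
    (tsum_congr fun i ↦ map_mul PadicInt.toZMod _ _)

/-- Reduction of the coefficients modulo `l`. -/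
noncomputable def residue : R →+* LaurentSeries (ZMod l) where
  toFun x := HahnSeries.ofSuppBddBelow (fun k ↦ PadicInt.toZMod (hC.coeff k x)) <| by
    obtain ⟨N, hN⟩ := eventually_atBot.mp (hC.eventually_pow_dvd 1 x)
    refine ⟨N, fun k hk ↦ ?_⟩
    contrapose! hk
    simpa [toZMod_eq_zero_iff] using hN k hk.le
  map_zero' := by ext; simp
  map_add' x y := by ext; simp
  map_one' := by
    ext k
    have := hC.algebraMap 1 k
    rw [map_one] at this
    simp [coeff_apply, this, HahnSeries.coeff_one, apply_ite]
  map_mul' x y := by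
    ext k
    rw [coeff_mul_eq_tsum]
    exact hC.toZMod_coeff_mul x y k

theorem residue_surjective : Function.Surjective hC.residue := by
  intro f
  obtain ⟨x, hx⟩ := hC.exists_eq (fun k ↦ ((f.coeff k).val : ℤ_[l])) <|
    tendsto_const_nhds.congr' <| (eventually_lt_atBot f.order).mono fun k hk ↦ by
      simp [HahnSeries.coeff_eq_zero_of_lt_order hk]
  refine ⟨x, ?_⟩
  ext k
  simp [residue, coeff, hx]

theorem ker_residue : RingHom.ker hC.residue = Ideal.span {(l : R)} := by
  ext x
  rw [RingHom.mem_ker, Ideal.mem_span_singleton, ← pow_one (l : R), hC.pow_dvd_iff,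
    HahnSeries.ext_iff, funext_iff]
  simp [residue, toZMod_eq_zero_iff]

theorem isMaximal_span : (Ideal.span {(l : R)}).IsMaximal :=
  hC.ker_residue ▸ RingHom.ker_isMaximal_of_surjective hC.residue hC.residue_surjective

variable [UniformSpace R] [IsUniformAddGroup R] [IsTopologicalRing R] [CompleteSpace R]

theorem coe_coeff_logDiv (hR : IsAdic (Ideal.span {(l : R)})) (k : ℤ) (t : R) :
    (C k (logDiv l t) : ℚ_[l]) = (l : ℚ_[l])⁻¹ *
      ∑' n : ℕ, ((-1 : ℚ_[l]) ^ n / (n + 1)) * (C k ((l * t) ^ (n + 1)) : ℚ_[l]) := by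
  let φ : R →+ ℚ_[l] := PadicInt.Coe.ringHom.toAddMonoidHom.comp (hC.coeff k).toAddMonoidHom
  have hφ : Continuous φ := continuous_subtype_val.comp <|
    continuous_of_forall_pow_dvd hR isAdic_span_natCast_padicInt (hC.coeff k).toAddMonoidHom
      fun M x hx ↦ hC.pow_dvd_iff.mp hx k
  have hterm (n : ℕ) : φ (((-1 : ℤ_[l]) ^ n * powDivSucc l n) • t ^ (n + 1)) =
      (l : ℚ_[l])⁻¹ * ((-1 : ℚ_[l]) ^ n / (n + 1) * (C k ((l * t) ^ (n + 1)) : ℚ_[l])) := by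
    have : (l * t) ^ (n + 1) = (l : ℤ_[l]) ^ (n + 1) • t ^ (n + 1) := by
      simp [Algebra.smul_def, mul_pow]
    have hl : (l : ℚ_[l]) ≠ 0 := mod_cast (Fact.out : l.Prime).ne_zero
    change (hC.coeff k _ : ℚ_[l]) = (l : ℚ_[l])⁻¹ * (_ * (hC.coeff k _ : ℚ_[l]))
    rw [this, map_smul, map_smul, smul_eq_mul, smul_eq_mul]
    push_cast [coe_powDivSucc]
    field_simp
    ring
  rw [← tsum_mul_left, ← tsum_congr hterm]
  exact (summable_mul_powDivSucc_smul hR _ t).map_tsum φ hφ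

end IsLaurentSeriesRing

end LaurentSeriesRing

theorem statement9_general {l : ℕ} [Fact l.Prime] (hl : Odd l) {R : Type*} [CommRing R]
    [IsAddTorsionFree R] [Algebra ℤ_[l] R] [UniformSpace R] [IsUniformAddGroup R]
    [IsTopologicalRing R] [CompleteSpace R] [T2Space R] (hR : IsAdic (Ideal.span {(l : R)}))
    (ψ : R →+* R) (hψ : ∀ x, (l : R) ∣ ψ x → (l : R) ∣ x) (LL : Rˣ → R)
    (hLL : ∀ (e : Rˣ) (t : R), (e : R) ^ l * Ring.inverse (ψ e) = 1 + l * t → LL e = logDiv l t) :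
    Function.Injective (fun x : R ↦ (l : ℤ_[l]) • x - ψ x) ∧
      Set.range (fun x : R ↦ (l : ℤ_[l]) • x - ψ x) =
        LL '' {e : Rˣ | ∃ v : R, (e : R) = 1 + (l : ℤ_[l]) • v} := by
  simp only [Nat.cast_smul_eq_nsmul, nsmul_eq_mul]
  have := hR.isAdicComplete_iff.mpr ⟨inferInstance, inferInstance⟩
  have hLL_one_add {e : Rˣ} {v : R} (he : (e : R) = 1 + l * v) :
      LL e = l * logDiv l v - ψ (logDiv l v) := by
    obtain ⟨t, ht, hlog⟩ := exists_pow_mul_inverse_eq_one_add_mul hR ψ v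
    rw [hLL e t (he ▸ ht), hlog]
  refine ⟨injective_natCast_mul_sub_map hψ, Set.Subset.antisymm ?_ ?_⟩
  · rintro _ ⟨x, rfl⟩
    obtain ⟨v, rfl⟩ := logDiv_surjective hR hl x
    obtain ⟨e, he⟩ := isUnit_one_add_mul (a := (l : R)) v
    exact ⟨e, ⟨v, he⟩, hLL_one_add he⟩
  · rintro _ ⟨e, ⟨v, he⟩, rfl⟩
    exact ⟨logDiv l v, (hLL_one_add he).symm⟩

/-- **Lemma 2 (1).**  The `ℤ_l`-linear map `l − ψ : Λ∧ → Λ∧` is injective, and its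
image equals `L(1 + lΛ∧)`, the image of the subgroup `1 + lΛ∧` of `Λ∧×` under the
integral logarithm `L`. -/
theorem statement9 (l : ℕ) [Fact (Nat.Prime l)] (hl : Odd l)
    -- `R` is the ring `Λ∧ = ℤ_l{{T}}`, the `l`-adic completion of the localization
    -- of `Λ = ℤ_l[[T]]` at the prime ideal `lΛ`, described concretely through its
    -- coefficient functions `C k : Λ∧ → ℤ_l` (`x = ∑_{k ∈ ℤ} (C k x)·T^k`,
    -- `C k x → 0` l-adically as `k → −∞`).
    (R : Type) [CommRing R] [Algebra ℤ_[l] R]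
    (C : ℤ → R → ℤ_[l]) (Tu gu : Rˣ) (ψ : R →+* R)
    (hext : ∀ x y : R, (∀ k, C k x = C k y) → x = y)
    (hsurj : ∀ f : ℤ → ℤ_[l], Tendsto f atBot (nhds 0) → ∃ x : R, ∀ k, C k x = f k)
    (htend : ∀ x : R, Tendsto (fun k => C k x) atBot (nhds 0))
    (hadd : ∀ x y : R, ∀ k, C k (x + y) = C k x + C k y)
    (hmul : ∀ x y : R, ∀ k, C k (x * y) = ∑' i : ℤ, C i x * C (k - i) y)
    (halg : ∀ (a : ℤ_[l]) (k : ℤ),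
      C k (algebraMap ℤ_[l] R a) = if k = 0 then a else 0)
    (hT : ∀ k, C k (Tu : R) = if k = 1 then 1 else 0)
    (hgu : (gu : R) = (1 + (Tu : R)) ^ l - 1)
    (hψ : ∀ (x : R) (k : ℤ),
      C k (ψ x) = ∑' m : ℤ, C m x * C k ((gu ^ m : Rˣ) : R))
    (LL : Rˣ → R)
    (hLL : ∀ (e : Rˣ) (k : ℤ),
      ((C k (LL e) : ℚ_[l])) = (l : ℚ_[l])⁻¹ *
        ∑' n : ℕ, ((-1 : ℚ_[l]) ^ n / (n + 1)) *
          ((C k (((e : R) ^ l * Ring.inverse (ψ (e : R)) - 1) ^ (n + 1)) : ℚ_[l]))) :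
    Function.Injective (fun x : R => (l : ℤ_[l]) • x - ψ x) ∧
    Set.range (fun x : R => (l : ℤ_[l]) • x - ψ x) =
      (fun e : Rˣ => LL e) '' {e : Rˣ | ∃ v : R, (e : R) = 1 + (l : ℤ_[l]) • v} := by
  have hC : IsLaurentSeriesRing C := ⟨hext, hsurj, htend, hadd, hmul, halg⟩
  let : WithIdeal R := ⟨Ideal.span {(l : R)}⟩
  have hR : IsAdic (Ideal.span {(l : R)}) := rfl
  have := hC.isAddTorsionFree
  obtain ⟨_, _⟩ := hR.isAdicComplete_iff.mp hC.isAdicComplete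
  refine statement9_general hl hR ψ (fun _ ↦ dvd_of_dvd_map hC.isMaximal_span ψ) LL
    fun e t ht ↦ hext _ _ fun k ↦ Subtype.ext ?_
  rw [hLL, hC.coe_coeff_logDiv hR, ht, add_sub_cancel_left]
end

section
/- One has the internal direct sum decomposition of ℤ_l-modules Λ∧ = Ξ ⊕ (l−ψ)Λ∧: every x ∈ Λ∧ is uniquely the sum of an element of Ξ and an element of (l−ψ)Λ∧. -/
open Filter

/-!
Let `U` be the decimation operator `∑ x_k T^k ↦ ∑ x_{lk} T^k`, so that `Ξ = ker U`. Since `ψ` is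
the substitution `T ↦ T^l` modulo `l`, we have `U ∘ ψ ≡ id` modulo `l`, and therefore
`U ∘ (l - ψ) ≡ -id` modulo `l`. As `Λ∧` is `l`-adically complete, `U ∘ (l - ψ)` is bijective, and
this says exactly that `l - ψ` is injective and its range is a complement of `ker U`. Only the
congruence `ψ T ≡ T^l` modulo `l` matters, so the argument works for every such substitution.
-/

theorem existsUnique_ker_add_range {A K M N : Type*} [Ring A] [AddCommGroup K] [AddCommGroup M]
    [AddCommGroup N] [Module A K] [Module A M] [Module A N] {f : M →ₗ[A] N} {g : K →ₗ[A] M}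
    (hfg : Function.Bijective (f ∘ₗ g)) (x : M) :
    ∃! q : M × M, q.1 ∈ f.ker ∧ q.2 ∈ g.range ∧ x = q.1 + q.2 := by
  obtain ⟨y, hy⟩ := hfg.surjective (f x)
  refine ⟨(x - g y, g y), ⟨?_, ⟨y, rfl⟩, by simp⟩, ?_⟩
  · simpa [sub_eq_zero] using hy.symm
  · rintro ⟨z, w⟩ ⟨hz, ⟨y', rfl⟩, rfl⟩
    obtain rfl : y = y' := hfg.injective (by simpa [LinearMap.mem_ker.mp hz] using hy)
    simp

theorem bijective_of_sub_mem_smul_top {A M : Type*} [CommRing A] [AddCommGroup M] [Module A M]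
    (I : Ideal A) [IsAdicComplete I M] {f : M →ₗ[A] M}
    (hf : ∀ x, f x - x ∈ (I • ⊤ : Submodule A M)) : Function.Bijective f := by
  constructor
  · have sub_mem_succ (n : ℕ) {x : M} (hx : x ∈ (I ^ n • ⊤ : Submodule A M)) :
        f x - x ∈ (I ^ (n + 1) • ⊤ : Submodule A M) := by
      have hle : (I ^ n • ⊤ : Submodule A M).map (f - LinearMap.id) ≤ I ^ (n + 1) • ⊤ := by
        rw [Submodule.map_smul'', pow_succ, Submodule.mul_smul]
        refine Submodule.smul_mono le_rfl ?_
        rintro _ ⟨y, -, rfl⟩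
        exact hf y
      exact hle (Submodule.mem_map_of_mem hx)
    refine (injective_iff_map_eq_zero f).mpr fun x hx => ?_
    refine IsHausdorff.haus (I := I) inferInstance x fun n => SModEq.zero.mpr ?_
    induction n with
    | zero => simp
    | succ n ih => simpa [hx] using sub_mem_succ n ih
  · refine surjective_of_mkQ_comp_surjective (I := I) fun q => ?_
    obtain ⟨x, rfl⟩ := Submodule.mkQ_surjective _ q
    exact ⟨x, (Submodule.Quotient.eq _).mpr (hf x)⟩

theorem dvd_units_zpow_sub_zpow {A : Type*} [CommRing A] {a : A} {u v : Aˣ}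
    (h : a ∣ (u - v : A)) (m : ℤ) : a ∣ ((u ^ m : Aˣ) - (v ^ m : Aˣ) : A) := by
  let q : A →* A ⧸ Ideal.span {a} := Ideal.Quotient.mk (Ideal.span {a})
  have hq : Units.map q u = Units.map q v :=
    Units.ext (Ideal.Quotient.eq.mpr (Ideal.mem_span_singleton.mpr h))
  have hqm : Units.map q (u ^ m) = Units.map q (v ^ m) := by rw [map_zpow, map_zpow, hq]
  exact Ideal.mem_span_singleton.mp (Ideal.Quotient.eq.mp (congrArg Units.val hqm))

theorem natCast_prime_dvd_one_add_pow_sub_one_sub_pow {A : Type*} [CommRing A] {p : ℕ}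
    (hp : p.Prime) (t : A) : (p : A) ∣ (1 + t) ^ p - 1 - t ^ p := by
  obtain ⟨r, hr⟩ := exists_add_pow_prime_eq hp 1 t
  exact ⟨t * r, by rw [hr]; ring⟩

/-! ### Null functions with values in the `p`-adic integers -/

section NullFunctions

variable {p : ℕ} [Fact p.Prime] {ι : Type*} {F : Filter ι}

theorem padicInt_pow_dvd_iff_norm_le {x : ℤ_[p]} {n : ℕ} :
    (p : ℤ_[p]) ^ n ∣ x ↔ ‖x‖ ≤ (p : ℝ) ^ (-n : ℤ) := by
  rw [PadicInt.norm_le_pow_iff_mem_span_pow, Ideal.mem_span_singleton]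

theorem padicInt_tendsto_zero_iff {f : ι → ℤ_[p]} :
    Tendsto f F (nhds 0) ↔ ∀ n : ℕ, ∀ᶠ i in F, (p : ℤ_[p]) ^ n ∣ f i := by
  simp only [padicInt_pow_dvd_iff_norm_le, NormedAddGroup.tendsto_nhds_zero]
  constructor
  · intro h n
    have hp : (0 : ℝ) < p := mod_cast (Fact.out : p.Prime).pos
    exact (h _ (zpow_pos hp _)).mono fun _ => le_of_lt
  · intro h ε hε
    obtain ⟨n, hn⟩ := PadicInt.exists_pow_neg_lt p hε
    exact (h n).mono fun _ hi => hi.trans_lt hn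

theorem padicInt_pow_dvd_tsum {f : ι → ℤ_[p]} {n : ℕ} (h : ∀ i, (p : ℤ_[p]) ^ n ∣ f i) :
    (p : ℤ_[p]) ^ n ∣ ∑' i, f i := by
  simp only [padicInt_pow_dvd_iff_norm_le] at h ⊢
  exact IsUltrametricDist.norm_tsum_le_of_forall_le_of_nonneg (by positivity) h

variable (p F) in
/-- The `ℤ_p`-module of functions that tend to `0` along `F`. For `F = atBot` on `ℤ`, these are the
coefficient sequences of the elements of `Λ∧`. -/
def nullFunctions : Submodule ℤ_[p] (ι → ℤ_[p]) where
  carrier := {f | Tendsto f F (nhds 0)}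
  zero_mem' := tendsto_const_nhds
  add_mem' hf hg := by simpa [Pi.add_def] using Tendsto.add hf hg
  smul_mem' a f hf := by simpa [Pi.smul_def] using Tendsto.const_mul a hf

namespace nullFunctions

theorem mem_maximalIdeal_pow_smul_top_iff {n : ℕ} {f : nullFunctions p F} :
    f ∈ (IsLocalRing.maximalIdeal ℤ_[p] ^ n • ⊤ : Submodule ℤ_[p] (nullFunctions p F)) ↔
      ∀ i, (p : ℤ_[p]) ^ n ∣ f.1 i := by
  have hp : (p : ℤ_[p]) ≠ 0 := mod_cast (Fact.out : p.Prime).ne_zero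
  rw [PadicInt.maximalIdeal_eq_span_p, Ideal.span_singleton_pow,
    Submodule.ideal_span_singleton_smul, Submodule.mem_smul_pointwise_iff_exists]
  constructor
  · rintro ⟨g, -, rfl⟩ i
    exact dvd_mul_right _ _
  · intro h
    choose g hg using h
    have hg0 : Tendsto g F (nhds 0) := padicInt_tendsto_zero_iff.mpr fun m => by
      filter_upwards [padicInt_tendsto_zero_iff.mp f.2 (n + m)] with i hi
      rwa [hg, pow_add, mul_dvd_mul_iff_left (pow_ne_zero n hp)] at hi
    exact ⟨⟨g, hg0⟩, trivial, Subtype.ext (funext fun i => (hg i).symm)⟩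

theorem smodEq_iff {n : ℕ} {f g : nullFunctions p F} :
    f ≡ g [SMOD (IsLocalRing.maximalIdeal ℤ_[p] ^ n • ⊤ : Submodule ℤ_[p] (nullFunctions p F))] ↔
      ∀ i, f.1 i ≡ g.1 i [SMOD (IsLocalRing.maximalIdeal ℤ_[p] ^ n • ⊤ : Ideal ℤ_[p])] := by
  simp only [SModEq.sub_mem, mem_maximalIdeal_pow_smul_top_iff]
  simp [PadicInt.maximalIdeal_eq_span_p, Ideal.span_singleton_pow, Ideal.mem_span_singleton]

instance isAdicComplete :
    IsAdicComplete (IsLocalRing.maximalIdeal ℤ_[p]) (nullFunctions p F) where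
  haus' f hf := Subtype.ext <| funext fun i =>
    IsHausdorff.haus (I := IsLocalRing.maximalIdeal ℤ_[p]) inferInstance _ fun n =>
      smodEq_iff.mp (hf n) i
  prec' f hf := by
    have hlim (i : ι) := IsPrecomplete.prec (I := IsLocalRing.maximalIdeal ℤ_[p]) inferInstance
      (f := fun n => (f n).1 i) fun hmn => smodEq_iff.mp (hf hmn) i
    choose L hL using hlim
    have hL0 : Tendsto L F (nhds 0) := padicInt_tendsto_zero_iff.mpr fun n => by
      filter_upwards [padicInt_tendsto_zero_iff.mp (f n).2 n] with i hi
      have hdvd := hL i n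
      simp only [SModEq.sub_mem, PadicInt.maximalIdeal_eq_span_p, Ideal.span_singleton_pow,
        smul_eq_mul, Ideal.mul_top, Ideal.mem_span_singleton] at hdvd
      exact (dvd_sub_right hi).mp hdvd
    exact ⟨⟨L, hL0⟩, fun n => smodEq_iff.mpr fun i => hL i n⟩

/-- Precomposition with `φ`. For `φ k = l * k` on `ℤ` it is the decimation operator
`∑ x_k T^k ↦ ∑ x_{lk} T^k`. -/
noncomputable def comap (φ : ι → ι) (hφ : Tendsto φ F F) :
    nullFunctions p F →ₗ[ℤ_[p]] nullFunctions p F :=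
  (LinearMap.funLeft ℤ_[p] ℤ_[p] φ).restrict fun _ hf => hf.comp hφ

@[simp]
theorem comap_apply (φ : ι → ι) (hφ : Tendsto φ F F) (f : nullFunctions p F) (i : ι) :
    (comap φ hφ f).1 i = f.1 (φ i) :=
  rfl

theorem bijective_comap_comp_natCast_smul_id_sub {M : Type*} [AddCommGroup M] [Module ℤ_[p] M]
    (e : M ≃ₗ[ℤ_[p]] nullFunctions p F) {φ : ι → ι} (hφ : Tendsto φ F F) {ψ : M →ₗ[ℤ_[p]] M}
    (hψ : ∀ x i, (p : ℤ_[p]) ∣ (e (ψ x)).1 (φ i) - (e x).1 i) :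
    Function.Bijective ((comap φ hφ ∘ₗ e) ∘ₗ ((p : ℤ_[p]) • LinearMap.id - ψ)) := by
  set G := (comap φ hφ ∘ₗ e) ∘ₗ ((p : ℤ_[p]) • LinearMap.id - ψ)
  have hG (x : M) (i : ι) : (G x).1 i = p * (e x).1 (φ i) - (e (ψ x)).1 (φ i) := by simp [G]
  have hneg : Function.Bijective (-(G ∘ₗ e.symm.toLinearMap)) := by
    refine bijective_of_sub_mem_smul_top (IsLocalRing.maximalIdeal ℤ_[p]) fun f => ?_
    obtain ⟨x, rfl⟩ := e.surjective f
    rw [← pow_one (IsLocalRing.maximalIdeal ℤ_[p]), mem_maximalIdeal_pow_smul_top_iff]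
    intro i
    have hcoord : ((-(G ∘ₗ e.symm.toLinearMap)) (e x) - e x).1 i =
        ((e (ψ x)).1 (φ i) - (e x).1 i) - p * (e x).1 (φ i) := by
      simp only [LinearMap.neg_apply, LinearMap.comp_apply, LinearEquiv.coe_coe,
        LinearEquiv.symm_apply_apply, Submodule.coe_sub, Submodule.coe_neg, Pi.sub_apply,
        Pi.neg_apply, hG]
      ring
    rw [hcoord, pow_one]
    exact dvd_sub (hψ x i) (dvd_mul_right _ _)
  convert neg_bijective.comp (hneg.comp e.bijective)
  ext x : 1
  simp

end nullFunctions

end NullFunctions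

/-! ### Rings of two-sided power series -/

/-- `R` is the ring of two-sided series `∑ x_k T^k` over `ℤ_p` with `x_k → 0` as `k → -∞`, where
`C k x` is the coefficient `x_k`. -/
structure IsTwoSidedSeries {p : ℕ} [Fact p.Prime] {R : Type*} [CommRing R] [Algebra ℤ_[p] R]
    (C : ℤ → R → ℤ_[p]) (T : Rˣ) : Prop where
  ext : ∀ x y : R, (∀ k, C k x = C k y) → x = y
  exists_coeff_eq : ∀ f : ℤ → ℤ_[p], Tendsto f atBot (nhds 0) → ∃ x : R, ∀ k, C k x = f k
  tendsto_coeff : ∀ x : R, Tendsto (fun k => C k x) atBot (nhds 0)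
  coeff_add : ∀ x y : R, ∀ k, C k (x + y) = C k x + C k y
  coeff_mul : ∀ x y : R, ∀ k, C k (x * y) = ∑' i : ℤ, C i x * C (k - i) y
  coeff_algebraMap : ∀ (a : ℤ_[p]) (k : ℤ), C k (algebraMap ℤ_[p] R a) = if k = 0 then a else 0
  coeff_var : ∀ k, C k (T : R) = if k = 1 then 1 else 0

/-- `ψ` is the substitution `T ↦ g`, that is `ψ (∑ x_m T^m) = ∑ x_m g^m`, the sum being taken
coefficientwise. A coefficient whose series diverges is `0` by convention; none does when `g` is
congruent to `T ^ p` modulo `p`. -/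
def IsSubstitution {p : ℕ} [Fact p.Prime] {R : Type*} [CommRing R] (C : ℤ → R → ℤ_[p]) (g : Rˣ)
    (ψ : R → R) : Prop :=
  ∀ (x : R) (k : ℤ), C k (ψ x) = ∑' m : ℤ, C m x * C k ((g ^ m : Rˣ) : R)

namespace IsTwoSidedSeries

variable {p : ℕ} [Fact p.Prime] {R : Type*} [CommRing R] [Algebra ℤ_[p] R]
  {C : ℤ → R → ℤ_[p]} {T : Rˣ}

theorem coeff_smul (h : IsTwoSidedSeries C T) (a : ℤ_[p]) (x : R) (k : ℤ) :
    C k (a • x) = a * C k x := by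
  rw [Algebra.smul_def, h.coeff_mul, tsum_eq_single 0]
  · simp [h.coeff_algebraMap]
  · intro i hi
    simp [h.coeff_algebraMap, hi]

/-- The coefficients of a series, as an isomorphism of `Λ∧` with the null sequences at `-∞`. -/
noncomputable def coeffEquiv (h : IsTwoSidedSeries C T) :
    R ≃ₗ[ℤ_[p]] nullFunctions p (atBot : Filter ℤ) :=
  LinearEquiv.ofBijective
    { toFun x := ⟨fun k => C k x, h.tendsto_coeff x⟩
      map_add' x y := Subtype.ext (funext (h.coeff_add x y))
      map_smul' a x := Subtype.ext (funext (h.coeff_smul a x)) }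
    ⟨fun x y hxy => h.ext x y (congrFun (congrArg Subtype.val hxy)),
      fun f => (h.exists_coeff_eq f.1 f.2).imp fun _ hx => Subtype.ext (funext hx)⟩

theorem natCast_dvd_coeff_sub (h : IsTwoSidedSeries C T) {n : ℕ} {x y : R}
    (hxy : (n : R) ∣ x - y) (k : ℤ) : (n : ℤ_[p]) ∣ C k x - C k y := by
  obtain ⟨r, hr⟩ := hxy
  obtain rfl : x = (n : ℤ_[p]) • r + y := by
    rw [Algebra.smul_def, map_natCast, ← hr, sub_add_cancel]
  exact ⟨C k r, by rw [h.coeff_add, h.coeff_smul, add_sub_cancel_right]⟩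

theorem coeff_var_mul (h : IsTwoSidedSeries C T) (x : R) (k : ℤ) :
    C k (T * x) = C (k - 1) x := by
  rw [h.coeff_mul, tsum_eq_single 1]
  · simp [h.coeff_var]
  · intro i hi
    simp [h.coeff_var, hi]

theorem coeff_var_zpow_mul (h : IsTwoSidedSeries C T) (n : ℤ) (x : R) (k : ℤ) :
    C k ((T ^ n : Rˣ) * x) = C (k - n) x := by
  induction n generalizing k with
  | zero => simp
  | succ n ih =>
    rw [zpow_add_one, mul_comm (T ^ (n : ℤ)), Units.val_mul, mul_assoc, h.coeff_var_mul, ih]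
    congr 1
    ring
  | pred n ih =>
    have hT : (T * ((T ^ (-(n : ℤ) - 1) : Rˣ) * x) : R) = (T ^ (-(n : ℤ)) : Rˣ) * x := by
      rw [← mul_assoc, ← Units.val_mul, ← zpow_one_add, add_sub_cancel]
    have hshift := h.coeff_var_mul ((T ^ (-(n : ℤ) - 1) : Rˣ) * x) (k + 1)
    rw [add_sub_cancel_right, hT, ih] at hshift
    rw [← hshift]
    congr 1
    ring

theorem coeff_var_zpow (h : IsTwoSidedSeries C T) (n k : ℤ) :
    C k ((T ^ n : Rˣ) : R) = if k = n then 1 else 0 := by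
  have hone := h.coeff_algebraMap 1 (k - n)
  rw [map_one, ← h.coeff_var_zpow_mul, mul_one] at hone
  simpa only [sub_eq_zero] using hone

/-! ### Substitutions congruent to the Frobenius substitution -/

variable {g : Rˣ}

theorem dvd_coeff_zpow_sub (h : IsTwoSidedSeries C T) (hg : (p : R) ∣ g - T ^ p) (m k : ℤ) :
    (p : ℤ_[p]) ∣ C k ((g ^ m : Rˣ) : R) - if k = p * m then 1 else 0 := by
  have hgT : (p : R) ∣ g - (T ^ p : Rˣ) := by rwa [Units.val_pow_eq_pow_val]
  have hzpow := h.natCast_dvd_coeff_sub (dvd_units_zpow_sub_zpow hgT m) k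
  rwa [← zpow_natCast, ← zpow_mul, h.coeff_var_zpow] at hzpow

/-- Modulo `p ^ (n + 1)` the power `g ^ p ^ n` is a power of `T`, so that `g ^ m` is, up to a shift
of exponents that grows with `m`, one of finitely many series. -/
theorem tendsto_coeff_pow_atTop (h : IsTwoSidedSeries C T) (hg : (p : R) ∣ g - T ^ p) (k : ℤ) :
    Tendsto (fun m : ℕ => C k ((g : R) ^ m)) atTop (nhds 0) := by
  have hp : 0 < p := (Fact.out : p.Prime).pos
  refine padicInt_tendsto_zero_iff.mpr fun n => ?_
  have hshift (q s : ℕ) : (p : ℤ_[p]) ^ n ∣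
      C k ((g : R) ^ (p ^ n * q + s)) - C (k - (p * p ^ n * q : ℕ)) ((g : R) ^ s) := by
    have hpow : ((p ^ n : ℕ) : R) ∣
        (g : R) ^ (p ^ n * q + s) - (T ^ ((p * p ^ n * q : ℕ) : ℤ) : Rˣ) * (g : R) ^ s := by
      rw [zpow_natCast, Units.val_pow_eq_pow_val, pow_add, ← sub_mul, pow_mul, pow_mul, pow_mul,
        Nat.cast_pow]
      exact (((pow_dvd_pow _ n.le_succ).trans (dvd_sub_pow_of_dvd_sub hg n)).trans
        (sub_dvd_pow_sub_pow _ _ q)).mul_right _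
    simpa [h.coeff_var_zpow_mul] using h.natCast_dvd_coeff_sub hpow k
  have hsmall : ∀ᶠ q : ℕ in atTop, ∀ s ∈ Finset.range (p ^ n),
      (p : ℤ_[p]) ^ n ∣ C (k - (p * p ^ n * q : ℕ)) ((g : R) ^ s) := by
    have hexp : Tendsto (fun q : ℕ => k - ((p * p ^ n * q : ℕ) : ℤ)) atTop atBot :=
      tendsto_atBot_add_const_left _ k <| tendsto_neg_atTop_atBot.comp <|
        tendsto_natCast_atTop_atTop.comp (tendsto_id.const_mul_atTop' (by positivity))
    exact (Filter.eventually_all_finset _).mpr fun s _ =>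
      hexp.eventually (padicInt_tendsto_zero_iff.mp (h.tendsto_coeff _) n)
  filter_upwards [(Nat.tendsto_div_const_atTop (pow_pos hp n).ne').eventually hsmall] with m hm
  have hdvd := hshift (m / p ^ n) (m % p ^ n)
  rw [Nat.div_add_mod] at hdvd
  exact (dvd_iff_dvd_of_dvd_sub hdvd).mpr
    (hm _ (Finset.mem_range.mpr (Nat.mod_lt _ (pow_pos hp n))))

theorem summable_coeff_mul_coeff_zpow (h : IsTwoSidedSeries C T) (hg : (p : R) ∣ g - T ^ p)
    (x : R) (k : ℤ) : Summable fun m : ℤ => C m x * C k ((g ^ m : Rˣ) : R) := by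
  apply NonarchimedeanAddGroup.summable_of_tendsto_cofinite_zero
  rw [Int.cofinite_eq, tendsto_sup, ← Nat.map_cast_int_atTop, tendsto_map'_iff]
  constructor
  · exact padicInt_tendsto_zero_iff.mpr fun n =>
      (padicInt_tendsto_zero_iff.mp (h.tendsto_coeff x) n).mono fun _ hm => hm.mul_right _
  · refine padicInt_tendsto_zero_iff.mpr fun n => ?_
    filter_upwards [padicInt_tendsto_zero_iff.mp (h.tendsto_coeff_pow_atTop hg k) n] with m hm
    simpa using hm.mul_left _

variable {ψ : R → R}

theorem isLinearMap_of_isSubstitution (h : IsTwoSidedSeries C T) (hg : (p : R) ∣ g - T ^ p)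
    (hψ : IsSubstitution C g ψ) : IsLinearMap ℤ_[p] ψ where
  map_add x y := h.ext _ _ fun k => by
    simp only [h.coeff_add, hψ _ k, add_mul]
    exact (h.summable_coeff_mul_coeff_zpow hg x k).tsum_add
      (h.summable_coeff_mul_coeff_zpow hg y k)
  map_smul a x := h.ext _ _ fun k => by
    simp only [h.coeff_smul, hψ _ k, mul_assoc]
    exact (h.summable_coeff_mul_coeff_zpow hg x k).tsum_mul_left a

theorem dvd_coeff_substitution_sub (h : IsTwoSidedSeries C T) (hg : (p : R) ∣ g - T ^ p)
    (hψ : IsSubstitution C g ψ) (x : R) (k : ℤ) : (p : ℤ_[p]) ∣ C (p * k) (ψ x) - C k x := by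
  have hp : p ≠ 0 := (Fact.out : p.Prime).ne_zero
  have hsum := hasSum_ite_eq k (C k x)
  rw [hψ, ← hsum.tsum_eq, ← (h.summable_coeff_mul_coeff_zpow hg x _).tsum_sub hsum.summable,
    ← pow_one (p : ℤ_[p])]
  refine padicInt_pow_dvd_tsum fun m => ?_
  have hterm := (h.dvd_coeff_zpow_sub hg m (p * k)).mul_left (C m x)
  rw [pow_one]
  convert hterm using 1
  rcases eq_or_ne m k with rfl | hmk
  · simp [mul_sub]
  · simp [hmk, hmk.symm, hp]

end IsTwoSidedSeries

theorem statement10_general {p : ℕ} [Fact p.Prime] {R : Type*} [CommRing R] [Algebra ℤ_[p] R]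
    {C : ℤ → R → ℤ_[p]} {T g : Rˣ} {ψ : R → R} (h : IsTwoSidedSeries C T)
    (hg : (p : R) ∣ g - T ^ p) (hψ : IsSubstitution C g ψ) (x : R) :
    ∃! q : R × R, (∀ k : ℤ, (p : ℤ) ∣ k → C k q.1 = 0) ∧
      (∃ y : R, q.2 = (p : ℤ_[p]) • y - ψ y) ∧ x = q.1 + q.2 := by
  let ψₗ : R →ₗ[ℤ_[p]] R := (h.isLinearMap_of_isSubstitution hg hψ).mk' ψ
  have hmul : Tendsto (fun k : ℤ => (p : ℤ) * k) atBot atBot :=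
    (tendsto_id.nsmul_atBot (Fact.out : p.Prime).pos).congr fun k => nsmul_eq_mul p k
  let U : R →ₗ[ℤ_[p]] nullFunctions p atBot := nullFunctions.comap _ hmul ∘ₗ h.coeffEquiv
  have hbij : Function.Bijective (U ∘ₗ ((p : ℤ_[p]) • LinearMap.id - ψₗ)) :=
    nullFunctions.bijective_comap_comp_natCast_smul_id_sub h.coeffEquiv hmul
      (h.dvd_coeff_substitution_sub hg hψ)
  have hker (z : R) : z ∈ U.ker ↔ ∀ k : ℤ, (p : ℤ) ∣ k → C k z = 0 :=
    ⟨by rintro hz _ ⟨k, rfl⟩; exact congrFun (congrArg Subtype.val hz) k,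
      fun hz => Subtype.ext (funext fun k => hz _ (dvd_mul_right _ k))⟩
  simpa [hker, ψₗ, eq_comm] using existsUnique_ker_add_range hbij x

/-- **Lemma 2 (2).**  `Λ∧ = Ξ ⊕ (l − ψ)Λ∧` as `ℤ_l`-modules:  every `x ∈ Λ∧` is
uniquely the sum of an element of `Ξ = {∑ x_k T^k : x_k = 0 whenever l ∣ k}` and an
element of `(l − ψ)Λ∧`. -/
theorem statement10 (l : ℕ) [Fact (Nat.Prime l)] (hl : Odd l)
    -- `R` is the ring `Λ∧ = ℤ_l{{T}}`, the `l`-adic completion of the localization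
    -- of `Λ = ℤ_l[[T]]` at the prime ideal `lΛ`, described concretely through its
    -- coefficient functions `C k : Λ∧ → ℤ_l` (`x = ∑_{k ∈ ℤ} (C k x)·T^k`,
    -- `C k x → 0` l-adically as `k → −∞`).
    (R : Type) [CommRing R] [Algebra ℤ_[l] R]
    (C : ℤ → R → ℤ_[l]) (Tu gu : Rˣ) (ψ : R →+* R)
    (hext : ∀ x y : R, (∀ k, C k x = C k y) → x = y)
    (hsurj : ∀ f : ℤ → ℤ_[l], Tendsto f atBot (nhds 0) → ∃ x : R, ∀ k, C k x = f k)
    (htend : ∀ x : R, Tendsto (fun k => C k x) atBot (nhds 0))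
    (hadd : ∀ x y : R, ∀ k, C k (x + y) = C k x + C k y)
    (hmul : ∀ x y : R, ∀ k, C k (x * y) = ∑' i : ℤ, C i x * C (k - i) y)
    (halg : ∀ (a : ℤ_[l]) (k : ℤ),
      C k (algebraMap ℤ_[l] R a) = if k = 0 then a else 0)
    (hT : ∀ k, C k (Tu : R) = if k = 1 then 1 else 0)
    (hgu : (gu : R) = (1 + (Tu : R)) ^ l - 1)
    (hψ : ∀ (x : R) (k : ℤ),
      C k (ψ x) = ∑' m : ℤ, C m x * C k ((gu ^ m : Rˣ) : R)) :
    ∀ x : R, ∃! p : R × R,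
      (∀ k : ℤ, (l : ℤ) ∣ k → C k p.1 = 0) ∧
      (∃ y : R, p.2 = (l : ℤ_[l]) • y - ψ y) ∧
      x = p.1 + p.2 := by
  have h : IsTwoSidedSeries C Tu := ⟨hext, hsurj, htend, hadd, hmul, halg, hT⟩
  exact statement10_general h (hgu ▸ natCast_prime_dvd_one_add_pow_sub_one_sub_pow Fact.out _) hψ
end

section
/- Let F = 𝔽_l((T)) be the field of formal Laurent series over the field with l elements, and let φ : F → F, φ(x) = x^l, be the Frobenius. Then the kernel of the additive map 1−φ : F → F is exactly 𝔽_l (the constants), and the cokernel F/(1−φ)(F) is an 𝔽_l-vector space for which the images of the monomials T^j, with j = 0 or with j < 0 and l ∤ j, form a basis. -/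
open HahnSeries

/-!
If `q` is a power of the characteristic and `c ^ q = c` for all coefficients `c`, then `x ↦ x ^ q`
is the substitution `ψ : T ↦ T ^ q`, which sends `∑ xₙ Tⁿ` to `∑ xₙ T^{qn}`. So `x - ψ x = y` is
the recursion `xₙ - x_{n/q} = yₙ`, where the second term is present only if `q ∣ n`. It propagates
along the chains `j, qj, q²j, …` with `q ∤ j`, and at `n = 0` it reads `0 = y₀`.

* If `y = 0`, then `xₙ = 0` for every `n ≠ 0`: divide `n` by `q` as long as possible.
* If `y` is supported on `n = 0` and on the `j < 0` with `q ∤ j`, then `x` is constant with value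
  `y_j` along the chain of such a `j`, which tends to `-∞`, so `y_j = 0`.
* If `y` has only positive exponents, the recursion has the solution
  `xₙ = yₙ + y_{n/q} + y_{n/q²} + ⋯`; on the other hand `T^{qn} ≡ Tⁿ` modulo the image of `1 - ψ`.

Hence the monomials `T^j`, with `j = 0` or with `j < 0` and `q ∤ j`, span a complement of the image.
-/

namespace ArtinSchreier

section Quotient

variable {ι R M : Type*} [Ring R] [AddCommGroup M] [Module R M] {N : Submodule R M} {v : ι → M}

lemma linearIndependent_mk_of_disjoint (hv : LinearIndependent R v)
    (h : Disjoint (Submodule.span R (Set.range v)) N) :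
    LinearIndependent R fun i => Submodule.Quotient.mk (p := N) (v i) :=
  hv.map (f := N.mkQ) (N.ker_mkQ.symm ▸ h)

lemma span_mk_eq_top_of_codisjoint (h : Codisjoint (Submodule.span R (Set.range v)) N) :
    Submodule.span R (Set.range fun i => Submodule.Quotient.mk (p := N) (v i)) = ⊤ := by
  rw [← (Submodule.map_mkQ_eq_top _ _).2 h.symm.eq_top, Submodule.map_span, ← Set.range_comp]
  rfl

end Quotient

section Monomials

variable {Γ R : Type*} [PartialOrder Γ] [Semiring R]

lemma ofFinsupp_single (a : Γ) (r : R) : ofFinsupp (Finsupp.single a r) = single a r := by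
  classical
  ext b
  simp only [coeff_ofFinsupp, Finsupp.single_apply, coeff_single, eq_comm]

lemma linearIndependent_single_one :
    LinearIndependent R (fun a : Γ => (single a 1 : HahnSeries Γ R)) := by
  have hinj : Function.Injective (ofFinsuppLinearMap R : (Γ →₀ R) →ₗ[R] HahnSeries Γ R) :=
    fun f g h => Finsupp.ext fun a => congrArg (fun x => x.coeff a) h
  convert (Finsupp.linearIndependent_single_one R Γ).map_injOn _ hinj.injOn using 2 with a
  exact (ofFinsupp_single a 1).symm

/-- The `R`-span of the monomials with exponents in `S`. It is written as the span of a family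
indexed by `S`, rather than of a set of monomials, because that family is to become a basis. -/
def monomialSpan (R : Type*) [Semiring R] (S : Set Γ) : Submodule R (HahnSeries Γ R) :=
  Submodule.span R (Set.range fun a : S => single (a : Γ) 1)

variable {S : Set Γ}

lemma single_one_mem_monomialSpan {a : Γ} (ha : a ∈ S) : single a 1 ∈ monomialSpan R S :=
  Submodule.subset_span ⟨⟨a, ha⟩, rfl⟩

lemma mem_monomialSpan_iff {x : HahnSeries Γ R} :
    x ∈ monomialSpan R S ↔ x.support.Finite ∧ x.support ⊆ S := by
  have hspan : monomialSpan R S = (Finsupp.supported R R S).map (ofFinsuppLinearMap R) := by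
    rw [monomialSpan, Finsupp.supported_eq_span_single, Submodule.map_span, Set.image_image,
      Set.image_eq_range]
    exact congrArg _ (congrArg _ (funext fun a => (ofFinsupp_single a.1 1).symm))
  rw [hspan]
  constructor
  · rintro ⟨f, hf, rfl⟩
    have hsupp : (ofFinsuppLinearMap R f).support = f.support := Finsupp.fun_support_eq f
    exact hsupp ▸ ⟨f.support.finite_toSet, hf⟩
  · rintro ⟨hfin, hS⟩
    refine ⟨Finsupp.ofSupportFinite x.coeff hfin, ?_, HahnSeries.ext rfl⟩
    rw [SetLike.mem_coe, Finsupp.mem_supported]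
    exact (Set.Finite.coe_toFinset hfin).subset.trans hS

end Monomials

section Expand

variable {R : Type*} [Semiring R] (q : ℕ) [NeZero q]

/-- The substitution `T ↦ T ^ q` on Laurent series, the analogue of `PowerSeries.expand`. -/
noncomputable def expand : LaurentSeries R →+* LaurentSeries R :=
  have hq : (0 : ℤ) < q := mod_cast Nat.pos_of_neZero q
  embDomainRingHom (AddMonoidHom.mulLeft (q : ℤ)) (mul_right_injective₀ hq.ne')
    fun _ _ => mul_le_mul_iff_right₀ hq

lemma coeff_expand_mul (x : LaurentSeries R) (m : ℤ) : (expand q x).coeff (q * m) = x.coeff m :=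
  embDomain_coeff

lemma coeff_expand_of_not_dvd (x : LaurentSeries R) {n : ℤ} (hn : ¬ (q : ℤ) ∣ n) :
    (expand q x).coeff n = 0 :=
  embDomain_of_notMem_range fun ⟨m, hm⟩ => hn ⟨m, hm.symm⟩

lemma expand_smul (c : R) (x : LaurentSeries R) : expand q (c • x) = c • expand q x :=
  embDomain_smul _ c x

lemma expand_single (n : ℤ) (r : R) : expand q (single n r) = single (q * n : ℤ) r :=
  embDomain_single

lemma expand_C (r : R) : expand q (C r) = C r := by
  simpa using expand_single q 0 r

end Expand

section Frobenius

lemma map_ofPowerSeries {R S : Type*} [Semiring R] [Semiring S] (φ : R →+* S)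
    (f : PowerSeries R) :
    (ofPowerSeries ℤ R f).map φ = ofPowerSeries ℤ S (f.map φ) := by
  ext m
  rw [map_coeff, PowerSeries.coeff_coe, PowerSeries.coeff_coe, PowerSeries.coeff_map, apply_ite φ,
    map_zero]

variable {R : Type*} [CommRing R] {p n q : ℕ} [ExpChar R p] [NeZero q]

lemma expand_ofPowerSeries (f : PowerSeries R) :
    expand q (ofPowerSeries ℤ R f) = ofPowerSeries ℤ R (f.expand q (NeZero.ne q)) := by
  ext m
  by_cases hd : (q : ℤ) ∣ m
  · obtain ⟨k, rfl⟩ := hd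
    have hneg : q * k < 0 ↔ k < 0 := by simp [mul_neg_iff, Nat.pos_of_neZero q]
    rw [coeff_expand_mul, PowerSeries.coeff_coe, PowerSeries.coeff_coe, Int.natAbs_mul,
      Int.natAbs_natCast, PowerSeries.coeff_expand_mul]
    simp only [hneg]
  · rw [coeff_expand_of_not_dvd q _ hd, PowerSeries.coeff_coe,
      PowerSeries.coeff_expand_of_not_dvd _ _ _ fun h => hd (Int.natCast_dvd.2 h), ite_self]

lemma map_iterateFrobenius_expand (hq : q = p ^ n) (x : LaurentSeries R) :
    (expand q x).map (iterateFrobenius R p n) = x ^ q := by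
  subst hq
  have hseries (f : PowerSeries R) :
      (expand (p ^ n) (ofPowerSeries ℤ R f)).map (iterateFrobenius R p n) =
        ofPowerSeries ℤ R f ^ p ^ n := by
    rw [expand_ofPowerSeries, map_ofPowerSeries, ← map_pow]
    exact congrArg _ (MvPowerSeries.map_iterateFrobenius_expand p (expChar_ne_zero R p) f n)
  have hsingle (m : ℤ) : (expand (p ^ n) (single m (1 : R))).map (iterateFrobenius R p n) =
      single m 1 ^ p ^ n := by
    rw [expand_single, single_pow, one_pow, nsmul_eq_mul]
    exact (HahnSeries.map_single (iterateFrobenius R p n : ZeroHom R R)).trans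
      (congrArg _ (map_one (iterateFrobenius R p n)))
  rw [← x.single_order_mul_powerSeriesPart, map_mul, mul_pow, ← hseries, ← hsingle]
  exact HahnSeries.map_mul (iterateFrobenius R p n : R →ₙ+* R)

lemma expand_eq_pow (hq : q = p ^ n) (hR : ∀ c : R, c ^ q = c) (x : LaurentSeries R) :
    expand q x = x ^ q := by
  rw [← map_iterateFrobenius_expand hq]
  ext m
  rw [map_coeff, iterateFrobenius_def, ← hq, hR]

end Frobenius

lemma chain_induction {q : ℕ} (hq : 1 < q) {P : ℤ → Prop} (not_dvd : ∀ n, ¬ (q : ℤ) ∣ n → P n)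
    (mul : ∀ n, n ≠ 0 → P n → P (q * n)) {n : ℤ} (hn : n ≠ 0) : P n := by
  induction hk : n.natAbs using Nat.strong_induction_on generalizing n with
  | _ k ih =>
    by_cases hd : (q : ℤ) ∣ n
    · obtain ⟨m, rfl⟩ := hd
      have hm : m ≠ 0 := right_ne_zero_of_mul hn
      have hlt : m.natAbs < k := by
        rw [← hk, Int.natAbs_mul, Int.natAbs_natCast]
        exact lt_mul_of_one_lt_left (Int.natAbs_pos.2 hm) hq
      exact mul m hm (ih _ hlt hm rfl)
    · exact not_dvd n hd

/-- `yₙ + y_{n/q} + y_{n/q²} + ⋯` for positive `n`, stopping at the first index not divisible by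
`q`. For `n ≤ 0` the value is just `yₙ`. -/
def chainSum {R : Type*} [Add R] (q : ℕ) [q.AtLeastTwo] (y : ℤ → R) (n : ℤ) : R :=
  if 0 < n ∧ (q : ℤ) ∣ n then y n + chainSum q y (n / q) else y n
termination_by n.toNat
decreasing_by
  have : n / q < n := Int.ediv_lt_self_of_pos_of_ne_one ‹0 < n ∧ (q : ℤ) ∣ n›.1
    (mod_cast Nat.AtLeastTwo.ne_one)
  omega

/-- The exponents of the monomials which form a basis of the cokernel of `1 - ψ`. -/
def basisExponents (q : ℕ) : Set ℤ := {j | j = 0 ∨ (j < 0 ∧ ¬ (q : ℤ) ∣ j)}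

lemma mul_notMem_basisExponents {q : ℕ} [NeZero q] {m : ℤ} (hm : m < 0) :
    q * m ∉ basisExponents q := by
  rintro (h | ⟨-, h⟩)
  · exact mul_ne_zero (mod_cast NeZero.ne q) hm.ne h
  · exact h (dvd_mul_right _ _)

section OneSubExpand

variable (R : Type*) [Ring R] (q : ℕ)

/-- The operator `1 - ψ` on Laurent series, where `ψ` is the substitution `T ↦ T ^ q`. -/
noncomputable def oneSubExpand [NeZero q] : LaurentSeries R →ₗ[R] LaurentSeries R where
  toFun x := x - expand q x
  map_add' x y := by rw [map_add, add_sub_add_comm]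
  map_smul' c x := by rw [expand_smul, RingHom.id_apply, smul_sub]

variable {R q}

lemma oneSubExpand_apply [NeZero q] (x : LaurentSeries R) : oneSubExpand R q x = x - expand q x :=
  rfl

lemma coeff_oneSubExpand_mul [NeZero q] (x : LaurentSeries R) (m : ℤ) :
    (oneSubExpand R q x).coeff (q * m) = x.coeff (q * m) - x.coeff m := by
  rw [oneSubExpand_apply, coeff_sub, coeff_expand_mul]

lemma coeff_oneSubExpand_of_not_dvd [NeZero q] (x : LaurentSeries R) {n : ℤ}
    (hn : ¬ (q : ℤ) ∣ n) : (oneSubExpand R q x).coeff n = x.coeff n := by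
  rw [oneSubExpand_apply, coeff_sub, coeff_expand_of_not_dvd q x hn, sub_zero]

lemma coeff_zero_oneSubExpand [NeZero q] (x : LaurentSeries R) :
    (oneSubExpand R q x).coeff 0 = 0 := by
  simpa using coeff_oneSubExpand_mul (q := q) x 0

variable [q.AtLeastTwo]

lemma oneSubExpand_eq_zero_iff {x : LaurentSeries R} :
    oneSubExpand R q x = 0 ↔ x ∈ Set.range (C : R →+* LaurentSeries R) := by
  constructor
  · intro hx
    have hcoeff {n : ℤ} (hn : n ≠ 0) : x.coeff n = 0 := by
      refine chain_induction (q := q) Nat.AtLeastTwo.one_lt (P := fun n => x.coeff n = 0)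
        (fun n hd => ?_) (fun n _ ih => ?_) hn
      · rw [← coeff_oneSubExpand_of_not_dvd x hd, hx, coeff_zero]
      · rw [← ih, ← sub_eq_zero, ← coeff_oneSubExpand_mul, hx, coeff_zero]
    refine ⟨x.coeff 0, ?_⟩
    ext n
    rcases eq_or_ne n 0 with rfl | hn
    · exact coeff_single_same 0 _
    · rw [hcoeff hn, C_apply, coeff_single_of_ne hn]
  · rintro ⟨c, rfl⟩
    rw [oneSubExpand_apply, expand_C, sub_self]

lemma coeff_eq_zero_of_coeff_oneSubExpand_eq_zero {x : LaurentSeries R}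
    (hx : ∀ m < 0, (oneSubExpand R q x).coeff (q * m) = 0) {j : ℤ} (hj : j < 0) :
    x.coeff j = 0 := by
  have hq : (0 : ℤ) < q := mod_cast Nat.pos_of_neZero q
  have hchain (k : ℕ) : x.coeff (q ^ k * j) = x.coeff j := by
    induction k with
    | zero => rw [pow_zero, one_mul]
    | succ k ih =>
      have hneg : (q : ℤ) ^ k * j < 0 := mul_neg_of_pos_of_neg (pow_pos hq k) hj
      rw [← ih, pow_succ', mul_assoc, ← sub_eq_zero, ← coeff_oneSubExpand_mul, hx _ hneg]
  have hlt : (q : ℤ) ^ x.order.natAbs * j < x.order := by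
    have hpow : (x.order.natAbs : ℤ) < (q : ℤ) ^ x.order.natAbs :=
      mod_cast Nat.lt_pow_self Nat.AtLeastTwo.one_lt
    calc (q : ℤ) ^ x.order.natAbs * j ≤ q ^ x.order.natAbs * (-1) := by gcongr; omega
      _ < x.order := by omega
  rw [← hchain x.order.natAbs, coeff_eq_zero_of_lt_order hlt]

lemma mem_range_oneSubExpand_of_coeff_eq_zero {y : LaurentSeries R} (hy : ∀ n ≤ 0, y.coeff n = 0) :
    y ∈ LinearMap.range (oneSubExpand R q) := by
  have hq : (0 : ℤ) < q := mod_cast Nat.pos_of_neZero q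
  have hnonpos {n : ℤ} (hn : n ≤ 0) : chainSum q y.coeff n = 0 := by
    rw [chainSum, if_neg fun h => h.1.not_ge hn, hy n hn]
  have hbdd : BddBelow (Function.support (chainSum q y.coeff)) :=
    ⟨0, fun n hn => le_of_not_ge fun h => hn (hnonpos h)⟩
  refine ⟨ofSuppBddBelow _ hbdd, ?_⟩
  ext n
  by_cases hd : (q : ℤ) ∣ n
  · obtain ⟨m, rfl⟩ := hd
    rw [coeff_oneSubExpand_mul, coeff_ofSuppBddBelow]
    rcases le_or_gt m 0 with hm | hm
    · have hqm : q * m ≤ 0 := mul_nonpos_of_nonneg_of_nonpos hq.le hm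
      rw [hnonpos hm, hnonpos hqm, hy _ hqm, sub_zero]
    · rw [chainSum, if_pos ⟨mul_pos hq hm, dvd_mul_right _ _⟩, Int.mul_ediv_cancel_left _ hq.ne',
        add_sub_cancel_right]
  · rw [coeff_oneSubExpand_of_not_dvd _ hd, coeff_ofSuppBddBelow, chainSum,
      if_neg fun h => hd h.2]

lemma disjoint_monomialSpan_range_oneSubExpand :
    Disjoint (monomialSpan R (basisExponents q)) (LinearMap.range (oneSubExpand R q)) := by
  rw [Submodule.disjoint_def]
  rintro _ hmem ⟨x, rfl⟩
  have hsupp {n : ℤ} (hn : n ∉ basisExponents q) : (oneSubExpand R q x).coeff n = 0 :=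
    of_not_not fun h => hn ((mem_monomialSpan_iff.1 hmem).2 h)
  have hx {j : ℤ} (hj : j < 0) : x.coeff j = 0 :=
    coeff_eq_zero_of_coeff_oneSubExpand_eq_zero
      (fun _ hm => hsupp (mul_notMem_basisExponents hm)) hj
  ext n
  by_cases hn : n ∈ basisExponents q
  · rcases hn with rfl | ⟨hneg, hd⟩
    · exact coeff_zero_oneSubExpand x
    · rw [coeff_oneSubExpand_of_not_dvd x hd, hx hneg, coeff_zero]
  · exact hsupp hn

lemma single_mem_monomialSpan_sup_range_oneSubExpand {n : ℤ} (hn : n ≤ 0) :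
    single n 1 ∈ monomialSpan R (basisExponents q) ⊔ LinearMap.range (oneSubExpand R q) := by
  have hbasis {j : ℤ} (hj : j ∈ basisExponents q) :
      single j 1 ∈ monomialSpan R (basisExponents q) ⊔ LinearMap.range (oneSubExpand R q) :=
    Submodule.mem_sup_left (single_one_mem_monomialSpan hj)
  rcases eq_or_ne n 0 with rfl | h0
  · exact hbasis (Or.inl rfl)
  refine chain_induction (q := q) Nat.AtLeastTwo.one_lt (P := fun n => n ≤ 0 → single n 1 ∈ _)
    (fun n hd hn => ?_) (fun n _ ih hn => ?_) h0 hn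
  · exact hbasis (Or.inr ⟨hn.lt_of_ne fun h => hd (h ▸ dvd_zero _), hd⟩)
  · have hsub : single n 1 - single (q * n : ℤ) 1 = oneSubExpand R q (single n 1) := by
      rw [oneSubExpand_apply, expand_single]
    have hn' : n ≤ 0 := nonpos_of_mul_nonpos_right hn (mod_cast Nat.pos_of_neZero q)
    rw [← sub_sub_cancel (single n 1) (single (q * n : ℤ) 1), hsub]
    exact sub_mem (ih hn') (Submodule.mem_sup_right ⟨_, rfl⟩)

lemma isCompl_monomialSpan_range_oneSubExpand :
    IsCompl (monomialSpan R (basisExponents q)) (LinearMap.range (oneSubExpand R q)) := by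
  refine ⟨disjoint_monomialSpan_range_oneSubExpand, codisjoint_iff.2 (eq_top_iff.2 fun y _ => ?_)⟩
  have hle : monomialSpan R (Set.Iic 0) ≤
      monomialSpan R (basisExponents q) ⊔ LinearMap.range (oneSubExpand R q) := by
    rw [monomialSpan, Submodule.span_le]
    rintro _ ⟨⟨n, hn⟩, rfl⟩
    exact single_mem_monomialSpan_sup_range_oneSubExpand hn
  have hsupp : (truncLT 1 y).support ⊆ Set.Icc y.order 0 := by
    intro n hn
    rw [support_truncLT] at hn
    exact ⟨order_le_of_coeff_ne_zero hn.1, Int.lt_add_one_iff.1 hn.2⟩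
  have htrunc : truncLT 1 y ∈ monomialSpan R (Set.Iic 0) :=
    mem_monomialSpan_iff.2 ⟨(Set.finite_Icc _ _).subset hsupp, hsupp.trans Set.Icc_subset_Iic_self⟩
  have hpos : y - truncLT 1 y ∈ LinearMap.range (oneSubExpand R q) :=
    mem_range_oneSubExpand_of_coeff_eq_zero fun n hn => by
      rw [coeff_sub, coeff_truncLT_of_lt (by omega), sub_self]
  rw [← add_sub_cancel (truncLT 1 y) y]
  exact add_mem (hle htrunc) (Submodule.mem_sup_right hpos)

end OneSubExpand

end ArtinSchreier

open ArtinSchreier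

theorem statement15_general {R : Type*} [CommRing R] {p n q : ℕ} [ExpChar R p]
    (hq : q = p ^ n) (hq_one : 1 < q) (hR : ∀ c : R, c ^ q = c) :
    {x : LaurentSeries R | x - x ^ q = 0} = Set.range (HahnSeries.C : R →+* LaurentSeries R) ∧
    LinearIndependent R
      (fun j : {j : ℤ // j = 0 ∨ (j < 0 ∧ ¬ (q : ℤ) ∣ j)} =>
        Submodule.Quotient.mk (p := Submodule.span R
            (Set.range (fun x : LaurentSeries R => x - x ^ q)))
          (HahnSeries.single (j : ℤ) (1 : R))) ∧
    Submodule.span R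
      (Set.range (fun j : {j : ℤ // j = 0 ∨ (j < 0 ∧ ¬ (q : ℤ) ∣ j)} =>
        Submodule.Quotient.mk (p := Submodule.span R
            (Set.range (fun x : LaurentSeries R => x - x ^ q)))
          (HahnSeries.single (j : ℤ) (1 : R)))) = ⊤ := by
  have : q.AtLeastTwo := ⟨hq_one⟩
  have hfun : (fun x : LaurentSeries R => x - x ^ q) = oneSubExpand R q :=
    funext fun x => by rw [oneSubExpand_apply, expand_eq_pow hq hR]
  have hspan : Submodule.span R (Set.range (fun x : LaurentSeries R => x - x ^ q)) =
      LinearMap.range (oneSubExpand R q) := by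
    rw [hfun, ← LinearMap.coe_range, Submodule.span_eq]
  have hcompl := isCompl_monomialSpan_range_oneSubExpand (R := R) (q := q)
  rw [hspan]
  refine ⟨?_, ?_, span_mk_eq_top_of_codisjoint hcompl.codisjoint⟩
  · ext x
    exact (Eq.congr_left (congrFun hfun x)).trans oneSubExpand_eq_zero_iff
  · exact linearIndependent_mk_of_disjoint
      (linearIndependent_single_one.comp _ Subtype.val_injective) hcompl.disjoint

/-- **Frobenius on `𝔽_l((T))`.**  Let `F = 𝔽_l((T))` and `φ(x) = x^l` the Frobenius.
The kernel of the additive map `1 − φ : F → F` is exactly the constants `𝔽_l`, and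
in the cokernel `F/(1−φ)(F)` the images of the monomials `T^j`, for `j = 0` or
(`j < 0` and `l ∤ j`), form a basis over `𝔽_l`. -/
theorem statement15 (l : ℕ) [Fact (Nat.Prime l)] (hl : Odd l) :
    {x : LaurentSeries (ZMod l) | x - x ^ l = 0} =
      Set.range (HahnSeries.C : ZMod l →+* LaurentSeries (ZMod l)) ∧
    LinearIndependent (ZMod l)
      (fun j : {j : ℤ // j = 0 ∨ (j < 0 ∧ ¬ (l : ℤ) ∣ j)} =>
        Submodule.Quotient.mk (p := Submodule.span (ZMod l)
            (Set.range (fun x : LaurentSeries (ZMod l) => x - x ^ l)))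
          (HahnSeries.single (j : ℤ) (1 : ZMod l))) ∧
    Submodule.span (ZMod l)
      (Set.range (fun j : {j : ℤ // j = 0 ∨ (j < 0 ∧ ¬ (l : ℤ) ∣ j)} =>
        Submodule.Quotient.mk (p := Submodule.span (ZMod l)
            (Set.range (fun x : LaurentSeries (ZMod l) => x - x ^ l)))
          (HahnSeries.single (j : ℤ) (1 : ZMod l)))) = ⊤ :=
  statement15_general (pow_one l).symm (Fact.out : l.Prime).one_lt ZMod.pow_card
end
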